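/- arXiv:1108.2354 — 2 statements merged into one kernel-verified Lean document; each statement's English description precedes it below -/
import Mathlib

section
/- Let (T, f) be a dynamical system on a tree and let (cl(S_H(T)), F) be its functional envelope. If the topological entropy h(f) = 0, then h(F) = 0; and if h(f) > 0, then h(F) = +∞. -/
open Set Filter Metric Topology TopologicalSpace

/-- An arc: a subset homeomorphic to `[0,1]`. -/
def IsArc {T : Type*} [TopologicalSpace T] (A : Set T) : Prop :=
  Nonempty (↥(Set.Icc (0:ℝ) 1) ≃ₜ ↥A)

/-- An arc with endpoints `x` and `y`. -/
def IsArcBetween {T : Type*} [TopologicalSpace T] (A : Set T) (x y : T) : Prop :=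
  ∃ e : ↥(Set.Icc (0:ℝ) 1) ≃ₜ ↥A,
    ((e ⟨0, by norm_num⟩ : ↥A) : T) = x ∧ ((e ⟨1, by norm_num⟩ : ↥A) : T) = y

/-- A tree: a continuum which is uniquely arcwise connected and is a point or a
union of finitely many arcs. -/
structure IsTreeSpace (T : Type*) [MetricSpace T] : Prop where
  compact : CompactSpace T
  conn : ConnectedSpace T
  uniqueArc : ∀ x y : T, x ≠ y → ∃! A : Set T, IsArcBetween A x y
  finiteArcs : (∃ x : T, (Set.univ : Set T) = {x}) ∨
    ∃ s : Finset (Set T), (∀ A ∈ s, IsArc A) ∧ ⋃₀ (s : Set (Set T)) = Set.univ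

/-- The unique arc from `x` to `y` in a tree. -/
noncomputable def treeArc {T : Type*} [MetricSpace T] (hT : IsTreeSpace T) (x y : T) :
    Set T := by
  classical exact if h : x = y then {x} else (hT.uniqueArc x y h).choose

/-- `Comp B x` : the connected component of `x` in `B` if `x ∈ B`, else `{x}`. -/
noncomputable def Comp {T : Type*} [TopologicalSpace T] (B : Set T) (x : T) : Set T := by
  classical exact if x ∈ B then connectedComponentIn B x else {x}

/-- `x` is an endpoint of the whole space (valence one). -/
def IsEnd {T : Type*} [TopologicalSpace T] (x : T) : Prop :=
  IsConnected ({x}ᶜ : Set T)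

/-- `x` is a cut-point of the whole space (valence at least two). -/
def IsCut {T : Type*} [TopologicalSpace T] (x : T) : Prop :=
  ¬ IsPreconnected ({x}ᶜ : Set T)

/-- `x` is an endpoint of the subspace `S` (valence one in `S`). -/
def IsEndpointOf {T : Type*} [TopologicalSpace T] (S : Set T) (x : T) : Prop :=
  x ∈ S ∧ IsConnected (S \ {x})

/-- A subcontinuum: a nonempty compact connected subset. -/
def IsSubcontinuum {T : Type*} [TopologicalSpace T] (A : Set T) : Prop :=
  A.Nonempty ∧ IsCompact A ∧ IsConnected A

/-- Attracting fixed point. -/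
def IsAFP {T : Type*} [TopologicalSpace T] (f : T → T) (x : T) : Prop :=
  f x = x ∧ ∀ U : Set T, IsOpen U → x ∈ U →
    ∃ V : Set T, IsOpen V ∧ x ∈ V ∧ V ⊆ U ∧ f '' closure V ⊆ V

/-- `A` is asymptotically periodic under `f`: for some `p ≥ 1` the sequence
`f^{pn}(A)` converges in the Hausdorff metric (to a nonempty compact set). -/
def AsympPeriodic {T : Type*} [MetricSpace T] (f : T → T) (A : Set T) : Prop :=
  ∃ p : ℕ, 1 ≤ p ∧ ∃ L : Set T, L.Nonempty ∧ IsCompact L ∧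
    Tendsto (fun n : ℕ => hausdorffDist (f^[p * n] '' A) L) atTop (𝓝 0)

/-- Kuratowski lower limit of a sequence of sets. -/
def KLiminf {T : Type*} [TopologicalSpace T] (A : ℕ → Set T) : Set T :=
  {x | ∀ U : Set T, IsOpen U → x ∈ U → ∀ᶠ n in atTop, (U ∩ A n).Nonempty}

/-- Kuratowski upper limit of a sequence of sets. -/
def KLimsup {T : Type*} [TopologicalSpace T] (A : ℕ → Set T) : Set T :=
  {x | ∀ U : Set T, IsOpen U → x ∈ U → ∃ᶠ n in atTop, (U ∩ A n).Nonempty}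

/-- Convergence in the hyperspace: the Kuratowski lower and upper limits agree. -/
def KConv {T : Type*} [TopologicalSpace T] (A : ℕ → Set T) : Prop :=
  KLiminf A = KLimsup A

/-- Set-theoretic limit superior of the iterated images of `A`. -/
def Ls {T : Type*} (f : T → T) (A : Set T) : Set T :=
  ⋂ m : ℕ, ⋃ n : ℕ, ⋃ (_ : m ≤ n), f^[n] '' A

/-- The hyperspace of subcontinua of `T`, with the Hausdorff metric. -/
abbrev SubCon (T : Type*) [MetricSpace T] :=
  {A : NonemptyCompacts T // IsConnected (A.1 : Set T)}

/-- The induced map on the hyperspace of subcontinua. -/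
noncomputable def indCon {T : Type*} [MetricSpace T] (f : T → T) (hf : Continuous f) :
    SubCon T → SubCon T :=
  fun A => ⟨⟨⟨f '' (A.1 : Set T), A.1.isCompact.image hf⟩, A.1.nonempty.image f⟩,
    A.2.image f hf.continuousOn⟩

/-- Topological entropy (Bowen–Dinaburg) of `f` on the subset `S`. -/
noncomputable def entropyOn {X : Type*} [MetricSpace X] (f : X → X) (S : Set X) : EReal :=
  Dynamics.coverEntropy f S

/-- Topological entropy of `f`. -/
noncomputable def entropy {X : Type*} [MetricSpace X] (f : X → X) : EReal :=
  Dynamics.coverEntropy f Set.univ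

/-- Maximal cardinality of an `(n,f,ε)`-separated subset of `S`. -/
noncomputable def sepNumOn {X : Type*} [MetricSpace X] (f : X → X) (S : Set X)
    (n : ℕ) (ε : ℝ) : ℕ :=
  sSup {k : ℕ | ∃ E : Finset X, ↑E ⊆ S ∧
    (∀ x ∈ E, ∀ y ∈ E, x ≠ y → ∃ j < n, ε < dist (f^[j] x) (f^[j] y)) ∧ E.card = k}

/-- Minimal cardinality of an `(n,f,ε)`-spanning subset of `S`. -/
noncomputable def spanNumOn {X : Type*} [MetricSpace X] (f : X → X) (S : Set X)
    (n : ℕ) (ε : ℝ) : ℕ :=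
  sInf {k : ℕ | ∃ F : Finset X, ↑F ⊆ S ∧
    (∀ x ∈ S, ∃ y ∈ F, ∀ j < n, dist (f^[j] x) (f^[j] y) ≤ ε) ∧ F.card = k}

noncomputable def sepNum {X : Type*} [MetricSpace X] (f : X → X) (n : ℕ) (ε : ℝ) : ℕ :=
  sepNumOn f Set.univ n ε

noncomputable def spanNum {X : Type*} [MetricSpace X] (f : X → X) (n : ℕ) (ε : ℝ) : ℕ :=
  spanNumOn f Set.univ n ε

/-- The graph of a map. -/
def graphOf {X : Type*} (φ : X → X) : Set (X × X) := {p | p.2 = φ p.1}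

/-- The functional envelope: the closure, in the hyperspace of nonempty compact
subsets of `X × X` with the Hausdorff metric, of the set of graphs of continuous
self-maps of `X`. -/
def FunctionalEnvelope (X : Type*) [MetricSpace X] :
    Set (NonemptyCompacts (X × X)) :=
  closure {G : NonemptyCompacts (X × X) | ∃ φ : X → X, Continuous φ ∧
    (G : Set (X × X)) = graphOf φ}

/-- `F` is the map induced by `f` on the functional envelope:
`F(φ) = f ∘ φ`, i.e. on graphs, `F(G) = (id × f)(G)`. -/
def IsEnvelopeMap {X : Type*} [MetricSpace X] (f : X → X)
    (F : ↥(FunctionalEnvelope X) → ↥(FunctionalEnvelope X)) : Prop :=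
  ∀ G : ↥(FunctionalEnvelope X),
    ((F G : NonemptyCompacts (X × X)) : Set (X × X)) =
      Prod.map id f '' ((G : NonemptyCompacts (X × X)) : Set (X × X))

/-- The setoid on `T` identifying all points of `M` (so that `Quotient` is `T/M`). -/
def collapseSetoid {T : Type*} (M : Set T) : Setoid T where
  r a b := a = b ∨ (a ∈ M ∧ b ∈ M)
  iseqv := by
    refine ⟨fun a => Or.inl rfl, ?_, ?_⟩
    · rintro a b (rfl | ⟨h1, h2⟩)
      exacts [Or.inl rfl, Or.inr ⟨h2, h1⟩]
    · rintro a b c (rfl | ⟨h1, h2⟩) h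
      · exact h
      · rcases h with rfl | ⟨h3, h4⟩
        exacts [Or.inr ⟨h1, h2⟩, Or.inr ⟨h1, h4⟩]

section Arcs

variable {T : Type*} [TopologicalSpace T]

/-- `x` and `y` are joined inside `U` by a possibly degenerate injective path. -/
def ArcJoined (U : Set T) (x y : T) : Prop :=
  ∃ (a b : ℝ) (γ : ℝ → T), a ≤ b ∧ Continuous γ ∧ InjOn γ (Icc a b) ∧ γ a = x ∧ γ b = y ∧
    MapsTo γ (Icc a b) U

theorem ArcJoined.symm {U : Set T} {x y : T} (h : ArcJoined U x y) : ArcJoined U y x := by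
  obtain ⟨a, b, γ, hab, hγ, hi, ha, hb, hU⟩ := h
  refine ⟨-b, -a, fun t => γ (-t), by linarith, by fun_prop, ?_, by simpa, by simpa, ?_⟩
  · intro s hs t ht hst
    have := hi (x₁ := -s) (x₂ := -t) ⟨by linarith [hs.2], by linarith [hs.1]⟩
      ⟨by linarith [ht.2], by linarith [ht.1]⟩ hst
    linarith
  · intro s hs
    exact hU ⟨by linarith [hs.2], by linarith [hs.1]⟩

theorem ArcJoined.of_injOn {U : Set T} {γ : ℝ → T} {a b s t : ℝ} (hγ : Continuous γ)
    (hi : InjOn γ (Icc a b)) (hs : s ∈ Icc a b) (ht : t ∈ Icc a b)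
    (hU : ∀ r ∈ uIcc s t, γ r ∈ U) : ArcJoined U (γ s) (γ t) := by
  rcases le_total s t with h | h
  · rw [uIcc_of_le h] at hU
    exact ⟨s, t, γ, h, hγ, hi.mono (Icc_subset_Icc hs.1 ht.2), rfl, rfl, hU⟩
  · rw [uIcc_of_ge h] at hU
    exact ArcJoined.symm ⟨t, s, γ, h, hγ, hi.mono (Icc_subset_Icc ht.1 hs.2), rfl, rfl, hU⟩

theorem ArcJoined.trans [T2Space T] {U : Set T} {x y z : T} (h : ArcJoined U x y)
    (h' : ArcJoined U y z) : ArcJoined U x z := by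
  obtain ⟨a, b, α, hab, hα, hαi, hαa, hαb, hαU⟩ := h
  obtain ⟨c, d, β, hcd, hβ, hβi, hβc, hβd, hβU⟩ := h'
  have hB : IsClosed (β '' Icc c d) := (isCompact_Icc.image hβ).isClosed
  have hK : IsCompact (Icc a b ∩ α ⁻¹' (β '' Icc c d)) :=
    isCompact_Icc.inter_right (hB.preimage hα)
  obtain ⟨t, ⟨htI, s, hsI, hst⟩, hmin⟩ := hK.exists_isLeast
    ⟨b, right_mem_Icc.2 hab, c, left_mem_Icc.2 hcd, by rw [hβc, hαb]⟩
  have hlt : ∀ u ∈ Icc a b, u < t → ∀ v ∈ Icc c d, α u ≠ β v := fun u hu hut v hv e =>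
    absurd (hmin ⟨hu, v, hv, e.symm⟩) (not_le.2 hut)
  have hleft : ∀ u, u ∈ Icc a (t + (d - s)) → u ≤ t → u ∈ Icc a b := fun u hu h =>
    ⟨hu.1, h.trans htI.2⟩
  have hright : ∀ u, u ∈ Icc a (t + (d - s)) → t ≤ u → u - t + s ∈ Icc c d := fun u hu h =>
    ⟨by linarith [hsI.1], by linarith [hu.2]⟩
  refine ⟨a, t + (d - s), fun u => if u ≤ t then α u else β (u - t + s), ?_, ?_, ?_, ?_, ?_, ?_⟩
  · linarith [htI.1, hsI.2]
  · refine Continuous.if_le hα (by fun_prop) continuous_id continuous_const ?_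
    rintro u rfl
    simp [hst]
  · intro u hu v hv huv
    simp only at huv
    split_ifs at huv with h1 h2 h2
    · exact hαi (hleft u hu h1) (hleft v hv h2) huv
    · rcases h1.lt_or_eq with h1 | rfl
      · exact absurd huv (hlt u (hleft u hu h1.le) h1 _ (hright v hv (not_le.1 h2).le))
      · rw [← hst] at huv
        have := hβi hsI (hright v hv (not_le.1 h2).le) huv
        linarith
    · rcases h2.lt_or_eq with h2 | rfl
      · exact absurd huv.symm (hlt v (hleft v hv h2.le) h2 _ (hright u hu (not_le.1 h1).le))
      · rw [← hst] at huv
        have := hβi (hright u hu (not_le.1 h1).le) hsI huv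
        linarith
    · have := hβi (hright u hu (not_le.1 h1).le) (hright v hv (not_le.1 h2).le) huv
      linarith
  · simp [htI.1, hαa]
  · simp only
    split_ifs with h
    · have : s = d := le_antisymm hsI.2 (by linarith)
      subst this
      simp [← hst, hβd]
    · rw [← hβd]
      congr 1
      ring
  · intro u hu
    simp only
    split_ifs with h
    · exact hαU (hleft u hu h)
    · exact hβU (hright u hu (not_le.1 h).le)

theorem isArcBetween_image [T2Space T] {γ : ℝ → T} {a b : ℝ} (hab : a < b) (hγ : Continuous γ)
    (hi : InjOn γ (Icc a b)) : IsArcBetween (γ '' Icc a b) (γ a) (γ b) := by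
  have hmem : ∀ t : Icc (0 : ℝ) 1, a + t * (b - a) ∈ Icc a b := fun t =>
    ⟨by nlinarith [t.2.1], by nlinarith [t.2.2]⟩
  let g : Icc (0 : ℝ) 1 → γ '' Icc a b := fun t => ⟨γ (a + t * (b - a)), _, hmem t, rfl⟩
  have hg : Continuous g := by
    apply Continuous.subtype_mk
    fun_prop
  have hb : Function.Bijective g := by
    constructor
    · intro s t hst
      have h := hi (hmem s) (hmem t) (congrArg Subtype.val hst)
      have h' : (s : ℝ) * (b - a) = t * (b - a) := by linarith
      exact Subtype.ext (mul_right_cancel₀ (sub_pos.2 hab).ne' h')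
    · rintro ⟨_, t, ht, rfl⟩
      refine ⟨⟨(t - a) / (b - a), div_nonneg (by linarith [ht.1]) (by linarith),
        (div_le_one (by linarith)).2 (by linarith [ht.2])⟩, Subtype.ext ?_⟩
      have : b - a ≠ 0 := (sub_pos.2 hab).ne'
      change γ (a + (t - a) / (b - a) * (b - a)) = γ t
      congr 1
      field_simp
      ring
  refine ⟨Continuous.homeoOfEquivCompactToT2 (f := Equiv.ofBijective g hb) hg, ?_, ?_⟩
  · change γ (a + 0 * (b - a)) = γ a
    simp
  · change γ (a + 1 * (b - a)) = γ b
    simp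

/-- A finite family of injective paths covering the space. -/
structure ArcCover (T : Type*) [TopologicalSpace T] (κ : Type*) where
  path : κ → ℝ → T
  len : κ → ℝ
  len_nonneg : ∀ k, 0 ≤ len k
  continuous_path : ∀ k, Continuous (path k)
  injOn_path : ∀ k, InjOn (path k) (Icc 0 (len k))
  exists_eq : ∀ x, ∃ k, ∃ t ∈ Icc 0 (len k), path k t = x

theorem ArcCover.eventually_arcJoined [T2Space T] {κ : Type*} [Finite κ] (Γ : ArcCover T κ)
    {U : Set T} (hU : IsOpen U) {x : T} (hx : x ∈ U) : ∀ᶠ y in 𝓝 x, ArcJoined U x y := by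
  have key : ∀ k, ∀ᶠ y in 𝓝 x, ∀ t ∈ Icc 0 (Γ.len k), Γ.path k t = y → ArcJoined U x y := by
    intro k
    have hc := Γ.continuous_path k
    by_cases hk : ∃ s ∈ Icc 0 (Γ.len k), Γ.path k s = x
    · obtain ⟨s, hs, rfl⟩ := hk
      obtain ⟨δ, hδ, hball⟩ := Metric.isOpen_iff.1 (hU.preimage hc) s hx
      have hK : IsClosed (Γ.path k '' (Icc 0 (Γ.len k) ∩ (ball s δ)ᶜ)) :=
        ((isCompact_Icc.inter_right isOpen_ball.isClosed_compl).image hc).isClosed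
      have hsK : Γ.path k s ∉ Γ.path k '' (Icc 0 (Γ.len k) ∩ (ball s δ)ᶜ) := by
        rintro ⟨t, ⟨ht, ht'⟩, hts⟩
        rw [Γ.injOn_path k ht hs hts] at ht'
        exact ht' (mem_ball_self hδ)
      filter_upwards [hK.isOpen_compl.mem_nhds hsK] with y hy t ht hty
      subst hty
      have htδ : t ∈ ball s δ := by
        by_contra h
        exact hy ⟨t, ⟨ht, h⟩, rfl⟩
      refine ArcJoined.of_injOn hc (Γ.injOn_path k) hs ht fun r hr => hball ?_
      rw [Real.ball_eq_Ioo] at htδ ⊢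
      exact OrdConnected.uIcc_subset ordConnected_Ioo ⟨by linarith, by linarith⟩ htδ hr
    · have hK : IsClosed (Γ.path k '' Icc 0 (Γ.len k)) := (isCompact_Icc.image hc).isClosed
      filter_upwards [hK.isOpen_compl.mem_nhds hk] with y hy t ht hty
      exact absurd ⟨t, ht, hty⟩ hy
  filter_upwards [Filter.eventually_all.2 key] with y hy
  obtain ⟨k, t, ht, e⟩ := Γ.exists_eq y
  exact hy k t ht e

theorem IsPreconnected.arcJoined [T2Space T] {κ : Type*} [Finite κ] (Γ : ArcCover T κ)
    {C U : Set T} (hC : IsPreconnected C) (hU : IsOpen U) (hCU : C ⊆ U) {x y : T} (hx : x ∈ C)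
    (hy : y ∈ C) : ArcJoined U x y := by
  have hrefl : ArcJoined U x x := (Γ.eventually_arcJoined hU (hCU hx)).self_of_nhds
  have h1 : IsOpen {z | z ∈ U ∧ ArcJoined U x z} := by
    rw [isOpen_iff_mem_nhds]
    rintro z ⟨hz, hxz⟩
    filter_upwards [hU.mem_nhds hz, Γ.eventually_arcJoined hU hz] with w hw hzw
    exact ⟨hw, hxz.trans hzw⟩
  have h2 : IsOpen {z | z ∈ U ∧ ¬ ArcJoined U x z} := by
    rw [isOpen_iff_mem_nhds]
    rintro z ⟨hz, hxz⟩
    filter_upwards [hU.mem_nhds hz, Γ.eventually_arcJoined hU hz] with w hw hzw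
    exact ⟨hw, fun hxw => hxz (hxw.trans hzw.symm)⟩
  have hsub := hC.subset_left_of_subset_union h1 h2
    (disjoint_left.2 fun z hz hz' => hz'.2 hz.2)
    (fun z hz => by
      by_cases h : ArcJoined U x z
      · exact Or.inl ⟨hCU hz, h⟩
      · exact Or.inr ⟨hCU hz, h⟩)
    ⟨x, hx, hCU hx, hrefl⟩
  exact (hsub hy).2

end Arcs

section Trees

variable {T : Type*} [MetricSpace T]

theorem IsTreeSpace.exists_arcCover (hT : IsTreeSpace T) :
    ∃ n : ℕ, Nonempty (ArcCover T (Fin n)) := by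
  rcases hT.finiteArcs with ⟨x, hx⟩ | ⟨s, hs, hcov⟩
  · refine ⟨1, ⟨⟨fun _ _ => x, fun _ => 0, fun _ => le_rfl,
      fun _ => continuous_const, fun _ => by simp, fun y => ⟨0, 0, by simp, ?_⟩⟩⟩⟩
    have : y ∈ ({x} : Set T) := hx ▸ mem_univ y
    exact this.symm
  · let g := s.equivFin.symm
    have he : ∀ i, Nonempty (↥(Icc (0 : ℝ) 1) ≃ₜ ↥(g i : Set T)) := fun i => hs _ (g i).2
    let e := fun i => (he i).some
    refine ⟨_, ⟨⟨fun i => IccExtend zero_le_one fun t => (e i t : T),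
      fun _ => 1, fun _ => zero_le_one, fun i => ?_, fun i => ?_, fun x => ?_⟩⟩⟩
    · exact Continuous.Icc_extend' (by fun_prop)
    · intro t ht t' ht' h
      simp only [IccExtend_of_mem _ _ ht, IccExtend_of_mem _ _ ht'] at h
      exact congrArg Subtype.val ((e i).injective (Subtype.ext h))
    · obtain ⟨A, hA, hx⟩ : x ∈ ⋃₀ (s : Set (Set T)) := hcov ▸ mem_univ x
      obtain ⟨i, hi⟩ := g.surjective ⟨A, hA⟩
      have hx : x ∈ (g i : Set T) := by rwa [hi]
      refine ⟨i, (e i).symm ⟨x, hx⟩, Subtype.coe_prop _, ?_⟩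
      simp only [IccExtend_of_mem _ _ (Subtype.coe_prop _)]
      simp

theorem IsTreeSpace.mem_of_isPreconnected (hT : IsTreeSpace T) {C : Set T}
    (hC : IsPreconnected C) {γ : ℝ → T} {a b : ℝ} (hγ : Continuous γ) (hi : InjOn γ (Icc a b))
    {s r t : ℝ} (hs : s ∈ Icc a b) (ht : t ∈ Icc a b) (hsr : s ≤ r) (hrt : r ≤ t)
    (hsC : γ s ∈ C) (htC : γ t ∈ C) : γ r ∈ C := by
  by_contra hr
  have hsr : s < r := hsr.lt_of_ne (by rintro rfl; exact hr hsC)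
  have hrt : r < t := hrt.lt_of_ne (by rintro rfl; exact hr htC)
  obtain ⟨_, ⟨Γ⟩⟩ := hT.exists_arcCover
  have hne : γ s ≠ γ t := fun h => (hsr.trans hrt).ne (hi hs ht h)
  obtain ⟨c, d, δ, hcd, hδ, hδi, hδc, hδd, hδU⟩ :=
    hC.arcJoined Γ (U := {γ r}ᶜ) isOpen_compl_singleton
      (fun z hz h => hr (by rw [mem_singleton_iff] at h; rwa [← h])) hsC htC
  have hcd : c < d := hcd.lt_of_ne (by rintro rfl; exact hne (hδc.symm.trans hδd))
  have h1 := isArcBetween_image hcd hδ hδi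
  rw [hδc, hδd] at h1
  have h2 := isArcBetween_image (hsr.trans hrt) hγ (hi.mono (Icc_subset_Icc hs.1 ht.2))
  have heq := (hT.uniqueArc _ _ hne).unique h1 h2
  have : γ r ∈ δ '' Icc c d := heq ▸ mem_image_of_mem γ ⟨hsr.le, hrt.le⟩
  obtain ⟨u, hu, hur⟩ := this
  exact hδU hu hur

theorem IsTreeSpace.joined (hT : IsTreeSpace T) (x y : T) : Joined x y := by
  rcases eq_or_ne x y with rfl | h
  · exact Joined.refl x
  · obtain ⟨A, ⟨e, h0, h1⟩, -⟩ := hT.uniqueArc x y h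
    exact ⟨⟨⟨fun t => (e t : T), by fun_prop⟩, h0, h1⟩⟩

end Trees

section Gates

variable {T : Type*} [MetricSpace T]

theorem IsTreeSpace.exists_mem_of_paths (hT : IsTreeSpace T) {γ : ℝ → T} {b : ℝ}
    (hγ : Continuous γ) (hi : InjOn γ (Icc 0 b)) {p : T} {A B : Set T}
    (hA : IsCompact A) (hAc : IsPreconnected A) (hB : IsCompact B) (hBc : IsPreconnected B)
    (hpA : p ∈ A) (hpB : p ∈ B) (hAγ : ∃ t ∈ Icc 0 b, γ t ∈ A) (hBγ : ∃ t ∈ Icc 0 b, γ t ∈ B) :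
    ∃ t ∈ Icc 0 b, γ t ∈ A ∧ γ t ∈ B := by
  have hC : IsPreconnected (A ∪ B) := hAc.union p hpA hpB hBc
  have hord : OrdConnected (Icc 0 b ∩ γ ⁻¹' (A ∪ B)) := by
    refine ⟨fun s hs t ht r hr => ⟨⟨hs.1.1.trans hr.1, hr.2.trans ht.1.2⟩, ?_⟩⟩
    exact hT.mem_of_isPreconnected hC hγ hi hs.1 ht.1 hr.1 hr.2 hs.2 ht.2
  have h := isPreconnected_closed_iff.1 hord.isPreconnected (γ ⁻¹' A) (γ ⁻¹' B)
    (hA.isClosed.preimage hγ) (hB.isClosed.preimage hγ) (fun t ht => ht.2)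
    (let ⟨t, ht, htA⟩ := hAγ; ⟨t, ⟨ht, Or.inl htA⟩, htA⟩)
    (let ⟨t, ht, htB⟩ := hBγ; ⟨t, ⟨ht, Or.inr htB⟩, htB⟩)
  obtain ⟨t, ⟨ht, -⟩, htA, htB⟩ := h
  exact ⟨t, ht, htA, htB⟩

/-- All subcontinua through `p` which meet a given arc contain a common point of that arc. -/
theorem IsTreeSpace.exists_gate (hT : IsTreeSpace T) {γ : ℝ → T} {b : ℝ} (hb : 0 ≤ b)
    (hγ : Continuous γ) (hi : InjOn γ (Icc 0 b)) (p : T) :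
    ∃ q ∈ Icc 0 b, ∀ A : Set T, IsCompact A → IsPreconnected A → p ∈ A →
      (∃ t ∈ Icc 0 b, γ t ∈ A) → γ q ∈ A := by
  by_cases hex : ∃ A : Set T, IsCompact A ∧ IsPreconnected A ∧ p ∈ A ∧ ∃ t ∈ Icc 0 b, γ t ∈ A
  swap
  · exact ⟨0, ⟨le_rfl, hb⟩, fun A h1 h2 h3 h4 => absurd ⟨A, h1, h2, h3, h4⟩ hex⟩
  let S : Set ℝ := {s | ∃ A : Set T, IsCompact A ∧ IsPreconnected A ∧ p ∈ A ∧
    IsLeast (Icc 0 b ∩ γ ⁻¹' A) s}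
  have hcpt : ∀ A : Set T, IsCompact A → IsCompact (Icc 0 b ∩ γ ⁻¹' A) := fun A hA =>
    isCompact_Icc.inter_right (hA.isClosed.preimage hγ)
  have hSb : BddAbove S := ⟨b, fun s ⟨A, _, _, _, hs⟩ => hs.1.1.2⟩
  have hmain : ∀ A : Set T, IsCompact A → IsPreconnected A → p ∈ A →
      (∃ t ∈ Icc 0 b, γ t ∈ A) → sSup S ∈ Icc 0 b ∧ γ (sSup S) ∈ A := by
    intro A hA hAc hpA hAγ
    have hne : (Icc 0 b ∩ γ ⁻¹' A).Nonempty := let ⟨t, ht, htA⟩ := hAγ; ⟨t, ht, htA⟩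
    obtain ⟨s, hs⟩ := (hcpt A hA).exists_isLeast hne
    obtain ⟨t, ht⟩ := (hcpt A hA).exists_isGreatest hne
    have h1 : s ≤ sSup S := le_csSup hSb ⟨A, hA, hAc, hpA, hs⟩
    have h2 : sSup S ≤ t := by
      refine csSup_le ⟨s, A, hA, hAc, hpA, hs⟩ ?_
      rintro s' ⟨B, hB, hBc, hpB, hs'⟩
      obtain ⟨r, hr, hrA, hrB⟩ := hT.exists_mem_of_paths hγ hi hA hAc hB hBc hpA hpB hAγ
        ⟨s', hs'.1⟩
      exact (hs'.2 ⟨hr, hrB⟩).trans (ht.2 ⟨hr, hrA⟩)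
    exact ⟨⟨hs.1.1.1.trans h1, h2.trans ht.1.1.2⟩,
      hT.mem_of_isPreconnected hAc hγ hi hs.1.1 ht.1.1 h1 h2 hs.1.2 ht.1.2⟩
  obtain ⟨A, h1, h2, h3, h4⟩ := hex
  exact ⟨sSup S, (hmain A h1 h2 h3 h4).1, fun A h1 h2 h3 h4 => (hmain A h1 h2 h3 h4).2⟩

end Gates

section Codes

/-- `𝒜` can be split into at most `N` pieces within which all pairs are `R`-related. -/
def Codable {X : Type*} (𝒜 : Set X) (R : X → X → Prop) (N : ℕ) : Prop :=
  ∃ c : 𝒜 → Fin N, ∀ x y : 𝒜, c x = c y → R x y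

theorem Codable.of_fintype {X C : Type*} [Fintype C] {𝒜 : Set X} {R : X → X → Prop} {N : ℕ}
    (hN : Fintype.card C ≤ N) (c : 𝒜 → C) (hc : ∀ x y : 𝒜, c x = c y → R x y) :
    Codable 𝒜 R N :=
  ⟨fun x => Fin.castLE hN (Fintype.equivFin C (c x)), fun x y h =>
    hc x y ((Fintype.equivFin C).injective (Fin.castLE_injective hN h))⟩

theorem Codable.mono {X : Type*} {𝒜 ℬ : Set X} {R S : X → X → Prop} {M N : ℕ}
    (h : Codable 𝒜 R M) (hsub : ℬ ⊆ 𝒜) (hMN : M ≤ N)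
    (hRS : ∀ x ∈ ℬ, ∀ y ∈ ℬ, R x y → S x y) : Codable ℬ S N := by
  obtain ⟨c, hc⟩ := h
  refine Codable.of_fintype (C := Fin M) (by simpa) (fun x => c (inclusion hsub x)) ?_
  exact fun x y hxy => hRS x x.2 y y.2 (hc _ _ hxy)

theorem Codable.and {X : Type*} {𝒜 : Set X} {R S : X → X → Prop} {M N : ℕ}
    (h : Codable 𝒜 R M) (h' : Codable 𝒜 S N) : Codable 𝒜 (fun x y => R x y ∧ S x y) (M * N) := by
  obtain ⟨c, hc⟩ := h
  obtain ⟨d, hd⟩ := h'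
  refine Codable.of_fintype (C := Fin M × Fin N) (by simp) (fun x => (c x, d x)) ?_
  intro x y hxy
  rw [Prod.mk.injEq] at hxy
  exact ⟨hc x y hxy.1, hd x y hxy.2⟩

theorem Codable.iUnion {X ι : Type*} [Fintype ι] {𝒜 : Set X} {ℬ : ι → Set X}
    {R : X → X → Prop} {N : ℕ} (hsub : 𝒜 ⊆ ⋃ i, ℬ i) (h : ∀ i, Codable (ℬ i) R N) :
    Codable 𝒜 R (Fintype.card ι * N) := by
  choose c hc using h
  have h' : ∀ x : 𝒜, ∃ i, (x : X) ∈ ℬ i := fun x => mem_iUnion.1 (hsub x.2)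
  choose i hi using h'
  refine Codable.of_fintype (C := ι × Fin N) (by simp) (fun x => (i x, c (i x) ⟨x, hi x⟩)) ?_
  intro x y hxy
  rw [Prod.mk.injEq] at hxy
  obtain ⟨h1, h2⟩ := hxy
  have hy : (y : X) ∈ ℬ (i x) := h1 ▸ hi y
  have h3 : c (i y) ⟨y, hi y⟩ = c (i x) ⟨y, hy⟩ := by
    have : ∀ k (e : i x = k) (hk : (y : X) ∈ ℬ k), c k ⟨y, hk⟩ = c (i x) ⟨y, hy⟩ := by
      rintro k rfl _
      rfl
    exact this _ h1 _
  exact hc (i x) ⟨x, hi x⟩ ⟨y, hy⟩ (h2.trans h3)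

theorem Codable.pi {X Y ι : Type*} [Fintype ι] {𝒜 : Set X} {ℬ : Set Y}
    {R : Y → Y → Prop} {N : ℕ} (h : Codable ℬ R N) (g : ι → X → Y)
    (hg : ∀ i, MapsTo (g i) 𝒜 ℬ) :
    Codable 𝒜 (fun x y => ∀ i, R (g i x) (g i y)) (N ^ Fintype.card ι) := by
  classical
  obtain ⟨c, hc⟩ := h
  refine Codable.of_fintype (C := ι → Fin N) (by simp) (fun x i => c ⟨g i x, hg i x.2⟩) ?_
  exact fun x y hxy i => hc ⟨_, hg i x.2⟩ ⟨_, hg i y.2⟩ (congrFun hxy i)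

end Codes

section HitCodes

variable {T ι : Type*}

/-- The members of a family of sets which meet `A`. -/
def hits (W : ι → Set T) (A : Set T) : Set ι := {i | (A ∩ W i).Nonempty}

theorem hits_mono (W : ι → Set T) {A B : Set T} (h : A ⊆ B) : hits W A ⊆ hits W B :=
  fun _ hi => hi.mono (inter_subset_inter_left _ h)

theorem hits_eq_of_ncard_eq [Finite ι] (W : ι → Set T) {A B : Set T} (h : A ⊆ B ∨ B ⊆ A)
    (hc : (hits W A).ncard = (hits W B).ncard) : hits W A = hits W B := by
  rcases h with h | h
  · exact eq_of_subset_of_ncard_le (hits_mono W h) hc.ge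
  · exact (eq_of_subset_of_ncard_le (hits_mono W h) hc.le).symm

theorem IsTreeSpace.codable_hits [MetricSpace T] (hT : IsTreeSpace T) {κ : Type*} [Fintype κ] (Γ : ArcCover T κ)
    [Fintype ι] (W : ι → Set T) (p : T) :
    Codable {A : Set T | IsCompact A ∧ IsPreconnected A ∧ p ∈ A}
      (fun A B => hits W A = hits W B) ((Fintype.card ι + 1) ^ (2 * Fintype.card κ)) := by
  classical
  choose q hq hgate using fun k =>
    hT.exists_gate (Γ.len_nonneg k) (Γ.continuous_path k) (Γ.injOn_path k) p
  let L : κ → Set T → Set T := fun k A =>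
    Γ.path k '' {t | t ∈ Icc 0 (Γ.len k) ∧ t ≤ q k ∧ Γ.path k t ∈ A}
  let R : κ → Set T → Set T := fun k A =>
    Γ.path k '' {t | t ∈ Icc 0 (Γ.len k) ∧ q k ≤ t ∧ Γ.path k t ∈ A}
  have hL : ∀ k A, L k A ⊆ A := by
    rintro k A _ ⟨t, ht, rfl⟩
    exact ht.2.2
  have hR : ∀ k A, R k A ⊆ A := by
    rintro k A _ ⟨t, ht, rfl⟩
    exact ht.2.2
  have hcov : ∀ A, ∀ x ∈ A, ∃ k, x ∈ L k A ∨ x ∈ R k A := by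
    intro A x hx
    obtain ⟨k, t, ht, rfl⟩ := Γ.exists_eq x
    rcases le_total t (q k) with h | h
    · exact ⟨k, Or.inl ⟨t, ⟨ht, h, hx⟩, rfl⟩⟩
    · exact ⟨k, Or.inr ⟨t, ⟨ht, h, hx⟩, rfl⟩⟩
  have hLc : ∀ k, ∀ A ∈ {A : Set T | IsCompact A ∧ IsPreconnected A ∧ p ∈ A},
      ∀ B ∈ {A : Set T | IsCompact A ∧ IsPreconnected A ∧ p ∈ A}, L k A ⊆ L k B ∨ L k B ⊆ L k A := by
    rintro k A ⟨hA, hAc, hpA⟩ B ⟨hB, hBc, hpB⟩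
    by_contra! hcon
    obtain ⟨⟨_, ⟨s, hs, rfl⟩, hsB⟩, ⟨_, ⟨t, ht, rfl⟩, htA⟩⟩ :=
      And.intro (not_subset.1 hcon.1) (not_subset.1 hcon.2)
    have hqA := hgate k A hA hAc hpA ⟨s, hs.1, hs.2.2⟩
    have hqB := hgate k B hB hBc hpB ⟨t, ht.1, ht.2.2⟩
    rcases le_total s t with h | h
    · exact htA ⟨t, ⟨ht.1, ht.2.1, hT.mem_of_isPreconnected hAc (Γ.continuous_path k)
        (Γ.injOn_path k) hs.1 (hq k) h ht.2.1 hs.2.2 hqA⟩, rfl⟩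
    · exact hsB ⟨s, ⟨hs.1, hs.2.1, hT.mem_of_isPreconnected hBc (Γ.continuous_path k)
        (Γ.injOn_path k) ht.1 (hq k) h hs.2.1 ht.2.2 hqB⟩, rfl⟩
  have hRc : ∀ k, ∀ A ∈ {A : Set T | IsCompact A ∧ IsPreconnected A ∧ p ∈ A},
      ∀ B ∈ {A : Set T | IsCompact A ∧ IsPreconnected A ∧ p ∈ A}, R k A ⊆ R k B ∨ R k B ⊆ R k A := by
    rintro k A ⟨hA, hAc, hpA⟩ B ⟨hB, hBc, hpB⟩
    by_contra! hcon
    obtain ⟨⟨_, ⟨s, hs, rfl⟩, hsB⟩, ⟨_, ⟨t, ht, rfl⟩, htA⟩⟩ :=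
      And.intro (not_subset.1 hcon.1) (not_subset.1 hcon.2)
    have hqA := hgate k A hA hAc hpA ⟨s, hs.1, hs.2.2⟩
    have hqB := hgate k B hB hBc hpB ⟨t, ht.1, ht.2.2⟩
    rcases le_total s t with h | h
    · exact hsB ⟨s, ⟨hs.1, hs.2.1, hT.mem_of_isPreconnected hBc (Γ.continuous_path k)
        (Γ.injOn_path k) (hq k) ht.1 hs.2.1 h hqB ht.2.2⟩, rfl⟩
    · exact htA ⟨t, ⟨ht.1, ht.2.1, hT.mem_of_isPreconnected hAc (Γ.continuous_path k)
        (Γ.injOn_path k) (hq k) hs.1 ht.2.1 h hqA hs.2.2⟩, rfl⟩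
  have hsub : ∀ A ∈ {A : Set T | IsCompact A ∧ IsPreconnected A ∧ p ∈ A},
      ∀ B ∈ {A : Set T | IsCompact A ∧ IsPreconnected A ∧ p ∈ A},
      (∀ k, (hits W (L k A)).ncard = (hits W (L k B)).ncard) →
      (∀ k, (hits W (R k A)).ncard = (hits W (R k B)).ncard) → hits W A ⊆ hits W B := by
    rintro A hA B hB h1 h2 i ⟨x, hx, hxi⟩
    obtain ⟨k, hk | hk⟩ := hcov A x hx
    · have hi : i ∈ hits W (L k A) := ⟨x, hk, hxi⟩
      rw [hits_eq_of_ncard_eq W (hLc k A hA B hB) (h1 k)] at hi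
      exact hits_mono W (hL k B) hi
    · have hi : i ∈ hits W (R k A) := ⟨x, hk, hxi⟩
      rw [hits_eq_of_ncard_eq W (hRc k A hA B hB) (h2 k)] at hi
      exact hits_mono W (hR k B) hi
  have hlt : ∀ s : Set ι, s.ncard < Fintype.card ι + 1 := fun s =>
    Nat.lt_succ_of_le ((ncard_le_card s).trans_eq Nat.card_eq_fintype_card)
  refine Codable.of_fintype
    (C := (κ → Fin (Fintype.card ι + 1)) × (κ → Fin (Fintype.card ι + 1))) ?_
    (fun A => (fun k => ⟨_, hlt (hits W (L k A))⟩, fun k => ⟨_, hlt (hits W (R k A))⟩)) ?_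
  · simp [two_mul, pow_add]
  · intro A B hAB
    simp only [Prod.mk.injEq, funext_iff, Fin.mk.injEq] at hAB
    exact Subset.antisymm (hsub A A.2 B B.2 hAB.1 hAB.2)
      (hsub B B.2 A A.2 (fun k => (hAB.1 k).symm) fun k => (hAB.2 k).symm)

end HitCodes

section Subdivision

theorem exists_nat_mul_le_le (h : ℝ) (m : ℕ) {s : ℝ} (h0 : 0 ≤ s) (hs : s ≤ (m + 1) * h) :
    ∃ l ≤ m, l * h ≤ s ∧ s ≤ (l + 1) * h := by
  induction m with
  | zero => exact ⟨0, le_rfl, by simpa using h0, hs⟩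
  | succ m ih =>
    rcases le_total s ((m + 1) * h) with h1 | h1
    · obtain ⟨l, hl, h2⟩ := ih h1
      exact ⟨l, hl.trans (Nat.le_succ m), h2⟩
    · exact ⟨m + 1, le_rfl, by push_cast; exact h1, hs⟩

variable {T : Type*} [MetricSpace T]

/-- A connected set covered by finitely many pieces of diameter at most `ε` is small. -/
theorem IsPreconnected.dist_le_card_mul {κ : Type*} [Fintype κ] {A : Set T}
    (hA : IsPreconnected A) {Q : κ → Set T} {ε : ℝ} (hε : 0 ≤ ε) (hcov : ∀ x ∈ A, ∃ k, x ∈ Q k)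
    (hQ : ∀ k, ∀ x ∈ A, ∀ y ∈ A, x ∈ Q k → y ∈ Q k → dist x y ≤ ε) {x y : T} (hx : x ∈ A)
    (hy : y ∈ A) : dist x y ≤ Fintype.card κ * ε := by
  have himg : Icc 0 (dist y x) ⊆ (fun z => dist z x) '' A :=
    (hA.image _ (by fun_prop)).Icc_subset ⟨x, hx, dist_self x⟩ ⟨y, hy, rfl⟩
  have hsub : Icc 0 (dist y x) ⊆ ⋃ k, (fun z => dist z x) '' (A ∩ Q k) := by
    intro r hr
    obtain ⟨z, hz, rfl⟩ := himg hr
    obtain ⟨k, hk⟩ := hcov z hz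
    exact mem_iUnion.2 ⟨k, z, ⟨hz, hk⟩, rfl⟩
  have hvol : ∀ k, MeasureTheory.volume ((fun z => dist z x) '' (A ∩ Q k)) ≤ ENNReal.ofReal ε := by
    intro k
    refine (Real.volume_le_diam _).trans (ediam_le ?_)
    rintro _ ⟨z, ⟨hz, hzk⟩, rfl⟩ _ ⟨w, ⟨hw, hwk⟩, rfl⟩
    rw [edist_dist]
    exact ENNReal.ofReal_le_ofReal ((dist_dist_dist_le_left z w x).trans (hQ k z hz w hw hzk hwk))
  have h := (MeasureTheory.measure_mono hsub).trans
    ((MeasureTheory.measure_iUnion_fintype_le MeasureTheory.volume _).trans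
      (Finset.sum_le_sum fun k _ => hvol k))
  rw [Real.volume_Icc, Finset.sum_const, Finset.card_univ, nsmul_eq_mul, sub_zero,
    ← ENNReal.ofReal_natCast, ← ENNReal.ofReal_mul (by positivity),
    ENNReal.ofReal_le_ofReal_iff (by positivity)] at h
  rwa [dist_comm]

theorem IsTreeSpace.exists_subdivision (hT : IsTreeSpace T) {ε : ℝ} (hε : 0 < ε) :
    ∃ (J : Type) (_ : Fintype J) (P : J → Set T) (D : Set T), D.Finite ∧
      (∀ j, (P j).Nonempty ∧ IsCompact (P j) ∧ IsPreconnected (P j) ∧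
        ∀ x ∈ P j, ∀ y ∈ P j, dist x y ≤ ε) ∧
      (∀ x, ∃ j, x ∈ P j) ∧
      ∀ A : Set T, IsPreconnected A → Disjoint A D → ∀ x ∈ A, ∀ y ∈ A, dist x y ≤ ε := by
  obtain ⟨n, ⟨Γ⟩⟩ := hT.exists_arcCover
  have hε' : 0 < ε / (n + 1) := by positivity
  have hδ : ∀ k, ∃ m : ℕ, ∀ s ∈ Icc 0 (Γ.len k), ∀ t ∈ Icc 0 (Γ.len k),
      dist s t ≤ Γ.len k / (m + 1) → dist (Γ.path k s) (Γ.path k t) ≤ ε / (n + 1) := by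
    intro k
    have huc := isCompact_Icc.uniformContinuousOn_of_continuous
      ((Γ.continuous_path k).continuousOn (s := Icc 0 (Γ.len k)))
    obtain ⟨δ, hδ, h⟩ := Metric.uniformContinuousOn_iff.1 huc _ hε'
    obtain ⟨m, hm⟩ := exists_nat_gt (Γ.len k / δ)
    refine ⟨m, fun s hs t ht hst => (h s hs t ht (hst.trans_lt ?_)).le⟩
    rw [div_lt_iff₀ hδ] at hm
    rw [div_lt_iff₀ (by positivity)]
    nlinarith
  choose m hm using hδ
  let w : Fin n → ℝ := fun k => Γ.len k / (m k + 1)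
  have hw : ∀ k, (m k + 1) * w k = Γ.len k := fun k => by
    simp only [w]
    field_simp
  have hw0 : ∀ k, 0 ≤ w k := fun k => div_nonneg (Γ.len_nonneg k) (by positivity)
  have hcell : ∀ k (l : ℕ), l ≤ m k → Icc (l * w k) ((l + 1) * w k) ⊆ Icc 0 (Γ.len k) := by
    intro k l hl
    rw [← hw k]
    have : (l : ℝ) ≤ m k := by exact_mod_cast hl
    exact Icc_subset_Icc (mul_nonneg (by positivity) (hw0 k))
      (mul_le_mul_of_nonneg_right (by linarith) (hw0 k))
  have hcell' : ∀ k (l : ℕ), l ≤ m k → ∀ s ∈ Icc (l * w k) ((l + 1) * w k),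
      ∀ t ∈ Icc (l * w k) ((l + 1) * w k), dist (Γ.path k s) (Γ.path k t) ≤ ε / (n + 1) := by
    intro k l hl s hs t ht
    refine hm k s (hcell k l hl hs) t (hcell k l hl ht) ((Real.dist_le_of_mem_Icc hs ht).trans_eq ?_)
    simp only [w]
    ring
  have hle : ε / (n + 1) ≤ ε := div_le_self hε.le (by linarith [n.cast_nonneg (α := ℝ)])
  refine ⟨Σ k, Fin (m k + 1), inferInstance,
    fun j => Γ.path j.1 '' Icc (j.2 * w j.1) ((j.2 + 1) * w j.1),
    range fun j : Σ k, Fin (m k + 1) => Γ.path j.1 (j.2 * w j.1), finite_range _, ?_, ?_, ?_⟩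
  · intro j
    have hc := Γ.continuous_path j.1
    refine ⟨(nonempty_Icc.2 ?_).image _, isCompact_Icc.image hc,
      isPreconnected_Icc.image _ hc.continuousOn, ?_⟩
    · nlinarith [hw0 j.1]
    · rintro _ ⟨s, hs, rfl⟩ _ ⟨t, ht, rfl⟩
      exact (hcell' j.1 j.2 (Nat.lt_succ_iff.1 j.2.2) s hs t ht).trans hle
  · intro x
    obtain ⟨k, t, ht, rfl⟩ := Γ.exists_eq x
    obtain ⟨l, hl, hlt⟩ := exists_nat_mul_le_le (w k) (m k) ht.1 (by rw [hw]; exact ht.2)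
    exact ⟨⟨k, l, Nat.lt_succ_of_le hl⟩, t, hlt, rfl⟩
  · intro A hA hAD x hx y hy
    have key : ∀ k, ∀ s ∈ Icc 0 (Γ.len k), ∀ t ∈ Icc 0 (Γ.len k), Γ.path k s ∈ A →
        Γ.path k t ∈ A → s ≤ t → dist (Γ.path k s) (Γ.path k t) ≤ ε / (n + 1) := by
      intro k s hs t ht hsA htA hst
      obtain ⟨l, hl, hls, hsl⟩ := exists_nat_mul_le_le (w k) (m k) hs.1 (by rw [hw]; exact hs.2)
      have htl : t ≤ (l + 1) * w k := by
        by_contra! hlt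
        have hlm : l < m k := by
          refine hl.lt_of_ne ?_
          rintro rfl
          rw [hw] at hlt
          exact hlt.not_ge ht.2
        have hmem := hT.mem_of_isPreconnected hA (Γ.continuous_path k) (Γ.injOn_path k) hs ht hsl
          hlt.le hsA htA
        exact disjoint_left.1 hAD hmem ⟨⟨k, l + 1, Nat.succ_lt_succ hlm⟩, by simp⟩
      exact hcell' k l hl s ⟨hls, hsl⟩ t ⟨hls.trans hst, htl⟩
    refine (hA.dist_le_card_mul hε'.le (Q := fun k => Γ.path k '' Icc 0 (Γ.len k))
      (fun z _ => Γ.exists_eq z) ?_ hx hy).trans ?_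
    · rintro k _ hs _ ht ⟨s, hs', rfl⟩ ⟨t, ht', rfl⟩
      rcases le_total s t with h | h
      · exact key k s hs' t ht' hs ht h
      · rw [dist_comm]
        exact key k t ht' s hs' ht hs h
    · rw [Fintype.card_fin, ← mul_div_assoc, div_le_iff₀ (by positivity)]
      nlinarith

end Subdivision

section Orbits

theorem Codable.comap {X Y : Type*} {𝒜 : Set X} {ℬ : Set Y} {R : Y → Y → Prop} {N : ℕ}
    (h : Codable ℬ R N) (g : X → Y) (hg : MapsTo g 𝒜 ℬ) :
    Codable 𝒜 (fun x y => R (g x) (g y)) N := by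
  obtain ⟨c, hc⟩ := h
  exact ⟨fun x => c ⟨g x, hg x.2⟩, fun x y hxy => hc _ _ hxy⟩

theorem Codable.symm {X : Type*} {𝒜 : Set X} {R : X → X → Prop} {N : ℕ} (h : Codable 𝒜 R N) :
    Codable 𝒜 (fun x y => R x y ∧ R y x) N :=
  let ⟨c, hc⟩ := h
  ⟨c, fun x y hxy => ⟨hc x y hxy, hc y x hxy.symm⟩⟩

variable {T : Type*} [MetricSpace T]

theorem Dynamics.IsDynCoverOf.codable {f : T → T} {ε : ℝ} {n : ℕ} {s : Finset T}
    (hs : Dynamics.IsDynCoverOf f univ {p : T × T | dist p.1 p.2 < ε} n s) :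
    Codable {A : Set T | A.Nonempty}
      (fun A B => ∃ x ∈ A, ∃ y ∈ B, ∀ k < n, dist (f^[k] x) (f^[k] y) ≤ 2 * ε) s.card := by
  have h : ∀ A : {A : Set T | A.Nonempty}, ∃ z : s, ∃ x ∈ (A : Set T),
      ∀ k < n, dist (f^[k] x) (f^[k] z) < ε := by
    rintro ⟨A, x, hx⟩
    obtain ⟨z, hz, hxz⟩ := hs (mem_univ x)
    exact ⟨⟨z, hz⟩, x, hx, fun k hk => Dynamics.mem_dynEntourage.1 hxz k hk⟩
  choose z x hx hxz using h
  refine Codable.of_fintype (C := s) (by simp) z fun A B hAB =>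
    ⟨x A, hx A, x B, hx B, fun k hk => ?_⟩
  have h1 := hxz A k hk
  have h2 := hxz B k hk
  rw [← hAB] at h2
  linarith [dist_triangle_right (f^[k] (x A)) (f^[k] (x B)) (f^[k] (z A))]

/-- The orbits of subcontinua of a tree can be coded, up to a small error, by subexponentially
more codes than the orbits of points. -/
theorem IsTreeSpace.codable_orbits (hT : IsTreeSpace T) {f : T → T} (hf : Continuous f)
    {κ : Type*} [Fintype κ] (Γ : ArcCover T κ) {J : Type*} [Fintype J] {P : J → Set T} {D : Set T}
    [Fintype D] {ε : ℝ} (hP : ∀ j, ∀ x ∈ P j, ∀ y ∈ P j, dist x y ≤ ε)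
    (hcov : ∀ x, ∃ j, x ∈ P j)
    (hD : ∀ A : Set T, IsPreconnected A → Disjoint A D → ∀ x ∈ A, ∀ y ∈ A, dist x y ≤ ε)
    {n : ℕ} {s : Finset T}
    (hs : Dynamics.IsDynCoverOf f univ {p : T × T | dist p.1 p.2 < ε} n s) :
    Codable {A : Set T | A.Nonempty ∧ IsCompact A ∧ IsPreconnected A}
      (fun A B => ∀ k < n, ∀ x ∈ A, ∃ y ∈ B, dist (f^[k] x) (f^[k] y) ≤ 3 * ε)
      ((n * Fintype.card D + 1) *
        (s.card * (n * Fintype.card J + 1) ^ (2 * Fintype.card κ))) := by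
  classical
  let W : Fin n × J → Set T := fun i => f^[i.1] ⁻¹' P i.2
  have himg : ∀ {A : Set T} (k : ℕ), IsPreconnected A → IsPreconnected (f^[k] '' A) :=
    fun k hA => hA.image _ (hf.iterate k).continuousOn
  let ℬ : Option (Fin n × D) → Set (Set T) := fun o =>
    {A | (A.Nonempty ∧ IsCompact A ∧ IsPreconnected A) ∧
      match o with
      | none => ∀ k < n, Disjoint (f^[k] '' A) D
      | some (j, p) => (p : T) ∈ f^[j] '' A ∧ ∀ k < (j : ℕ), Disjoint (f^[k] '' A) D}
  have hclose : ∀ {A B : Set T} {x y : T} {k : ℕ}, IsPreconnected A → Disjoint (f^[k] '' A) D →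
      x ∈ A → y ∈ B → dist (f^[k] x) (f^[k] y) ≤ 2 * ε →
      ∀ x' ∈ A, ∃ y ∈ B, dist (f^[k] x') (f^[k] y) ≤ 3 * ε := by
    intro A B x y k hA hAD hx hy hxy x' hx'
    have h := hD _ (himg k hA) hAD _ ⟨x', hx', rfl⟩ _ ⟨x, hx, rfl⟩
    exact ⟨y, hy, by linarith [dist_triangle (f^[k] x') (f^[k] x) (f^[k] y)]⟩
  have hcard : Fintype.card (Option (Fin n × D)) = n * Fintype.card D + 1 := by simp
  rw [← hcard]
  refine Codable.iUnion (ℬ := ℬ) ?_ ?_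
  · intro A hA
    rw [mem_iUnion]
    by_cases h : ∃ k, k < n ∧ ¬ Disjoint (f^[k] '' A) D
    · obtain ⟨p, hp, hpD⟩ := not_disjoint_iff.1 (Nat.find_spec h).2
      refine ⟨some (⟨Nat.find h, (Nat.find_spec h).1⟩, ⟨p, hpD⟩), hA, hp, fun k hk => ?_⟩
      by_contra hcon
      exact Nat.find_min h hk ⟨hk.trans (Nat.find_spec h).1, hcon⟩
    · push Not at h
      exact ⟨none, hA, h⟩
  · rintro (_ | ⟨j, p⟩)
    · refine hs.codable.mono (fun A hA => hA.1.1) (Nat.le_mul_of_pos_right _ (by positivity)) ?_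
      rintro A hA B hB ⟨x, hx, y, hy, hxy⟩ k hk
      exact hclose hA.1.2.2 (hA.2 k hk) hx hy (hxy k hk)
    · have hcard' : Fintype.card (Fin n × J) = n * Fintype.card J := by simp
      have h2 := (hT.codable_hits Γ W p).comap (𝒜 := ℬ (some (j, p))) (fun A => f^[j] '' A)
        fun A hA => ⟨hA.1.2.1.image (hf.iterate j), himg j hA.1.2.2, hA.2.1⟩
      rw [hcard'] at h2
      refine ((hs.codable.mono (fun A (hA : A ∈ ℬ (some (j, p))) => hA.1.1) le_rfl
        fun _ _ _ _ h => h).and h2).mono subset_rfl le_rfl ?_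
      rintro A hA B hB ⟨⟨x, hx, y, hy, hxy⟩, hhits⟩ k hk
      rcases lt_or_ge k j with hkj | hkj
      · exact hclose hA.1.2.2 (hA.2.2 k hkj) hx hy (hxy k hk)
      · intro x' hx'
        obtain ⟨l, rfl⟩ := Nat.exists_eq_add_of_le' hkj
        obtain ⟨i, hi⟩ := hcov (f^[l] (f^[j] x'))
        have hmem : ((⟨l, by omega⟩, i) : Fin n × J) ∈ hits W (f^[j] '' A) :=
          ⟨f^[j] x', ⟨x', hx', rfl⟩, hi⟩
        rw [hhits] at hmem
        obtain ⟨_, ⟨y', hy', rfl⟩, hy'i⟩ := hmem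
        refine ⟨y', hy', ?_⟩
        rw [Function.iterate_add_apply, Function.iterate_add_apply]
        have h := hP i _ hi _ hy'i
        linarith [dist_nonneg.trans h]

theorem Codable.maps {f : T → T} {J : Type*} [Fintype J] {P : J → Set T} {ε : ℝ} {n N : ℕ}
    (h : Codable {A : Set T | A.Nonempty ∧ IsCompact A ∧ IsPreconnected A}
      (fun A B => ∀ k < n, ∀ x ∈ A, ∃ y ∈ B, dist (f^[k] x) (f^[k] y) ≤ 3 * ε) N)
    (hP : ∀ j, (P j).Nonempty ∧ IsCompact (P j) ∧ IsPreconnected (P j) ∧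
        ∀ x ∈ P j, ∀ y ∈ P j, dist x y ≤ ε) (hcov : ∀ x, ∃ j, x ∈ P j) :
    Codable {φ : T → T | Continuous φ}
      (fun φ ψ => ∀ k < n, ∀ x, ∃ y, dist x y ≤ 3 * ε ∧
        dist (f^[k] (φ x)) (f^[k] (ψ y)) ≤ 3 * ε) (N ^ Fintype.card J) := by
  refine (h.pi (𝒜 := {φ : T → T | Continuous φ}) (fun j φ => φ '' P j) ?_).mono subset_rfl
    le_rfl ?_
  · intro j φ hφ
    exact ⟨(hP j).1.image φ, (hP j).2.1.image hφ, (hP j).2.2.1.image φ hφ.continuousOn⟩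
  · intro φ hφ ψ hψ hR k hk x
    obtain ⟨j, hj⟩ := hcov x
    obtain ⟨_, ⟨y, hy, rfl⟩, hxy⟩ := hR j k hk (φ x) ⟨x, hj, rfl⟩
    have h := (hP j).2.2.2 x hj y hy
    exact ⟨y, by linarith [dist_nonneg.trans h], hxy⟩

theorem Codable.coverMincard_le {X : Type*} {F : X → X} {S : Set X} {U : Set (X × X)} {n N : ℕ}
    (h : Codable S (fun x y => (x, y) ∈ Dynamics.dynEntourage F U n) N) :
    Dynamics.coverMincard F S U n ≤ N := by
  classical
  obtain ⟨c, hc⟩ := h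
  let s : Finset X := Finset.univ.image fun v : range c => ((rangeSplitting c v : S) : X)
  have hcov : Dynamics.IsDynCoverOf F S U n s := by
    intro x hx
    let v : range c := ⟨c ⟨x, hx⟩, mem_range_self _⟩
    exact ⟨_, Finset.mem_coe.2 (Finset.mem_image_of_mem _ (Finset.mem_univ v)),
      hc ⟨x, hx⟩ _ (apply_rangeSplitting c v).symm⟩
  refine hcov.coverMincard_le_card.trans ?_
  have : s.card ≤ N :=
    Finset.card_image_le.trans ((Fintype.card_subtype_le _).trans_eq (by simp))
  exact_mod_cast this

end Orbits

section Growth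

open ExpGrowth ENNReal

theorem expGrowthSup_linear_le (d : ℕ) :
    expGrowthSup (fun n => ((n * d + 1 : ℕ) : ℝ≥0∞)) ≤ 0 := by
  rw [← EReal.le_of_forall_lt_iff_le]
  intro b hb
  have hb : 0 < b := by exact_mod_cast hb
  rw [← expGrowthSup_exp (a := (b : EReal))]
  refine expGrowthSup_le_of_eventually_le (b := ENNReal.ofReal (d / b + 1)) ofReal_ne_top
    (Eventually.of_forall fun n => ?_)
  have h : (b : EReal) * (n : EReal) = ((b * n : ℝ) : EReal) := by push_cast; rfl
  rw [h, EReal.exp_coe, ← ofReal_mul (by positivity), ← ofReal_natCast]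
  refine ofReal_le_ofReal ?_
  have h1 := Real.add_one_le_exp (b * n)
  calc ((n * d + 1 : ℕ) : ℝ) ≤ (d / b + 1) * (b * n + 1) := by
        push_cast
        have : (d / b + 1) * (b * n + 1) = n * d + 1 + (d / b + b * n) := by field_simp; ring
        rw [this]
        have : 0 ≤ d / b + b * n := by positivity
        linarith
    _ ≤ _ := mul_le_mul_of_nonneg_left h1 (by positivity)

theorem expGrowthSup_mul_nonpos {u v : ℕ → ℝ≥0∞} (hu : expGrowthSup u ≤ 0)
    (hv : expGrowthSup v ≤ 0) : expGrowthSup (u * v) ≤ 0 :=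
  (expGrowthSup_mul_le (Or.inr (hv.trans_lt EReal.zero_lt_top).ne)
    (Or.inl (hu.trans_lt EReal.zero_lt_top).ne)).trans (add_nonpos hu hv)

theorem expGrowthSup_npow_nonpos {u : ℕ → ℝ≥0∞} (hu : expGrowthSup u ≤ 0) (m : ℕ) :
    expGrowthSup (u ^ m) ≤ 0 := by
  induction m with
  | zero =>
    rw [pow_zero]
    exact (expGrowthSup_const one_ne_zero one_ne_top).le
  | succ m ih =>
    rw [pow_succ]
    exact expGrowthSup_mul_nonpos ih hu

end Growth

section Envelope

variable {T : Type*} [MetricSpace T] {f : T → T}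
  {F : ↥(FunctionalEnvelope T) → ↥(FunctionalEnvelope T)}

theorem IsEnvelopeMap.iterate (hF : IsEnvelopeMap f F) (n : ℕ) (G : ↥(FunctionalEnvelope T)) :
    ((F^[n] G : NonemptyCompacts (T × T)) : Set (T × T)) =
      Prod.map id f^[n] '' ((G : NonemptyCompacts (T × T)) : Set (T × T)) := by
  induction n with
  | zero => simp
  | succ n ih =>
    rw [Function.iterate_succ_apply', hF, ih, image_image, Function.iterate_succ']
    rfl

theorem IsEnvelopeMap.continuous (hF : IsEnvelopeMap f F) (hf : Continuous f) : Continuous F := by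
  have hg : Continuous (Prod.map id f : T × T → T × T) := continuous_id.prodMap hf
  rw [continuous_induced_rng]
  have h : Subtype.val ∘ F = NonemptyCompacts.map _ hg ∘ Subtype.val := by
    funext G
    exact NonemptyCompacts.ext (hF G)
  rw [h]
  exact hg.nonemptyCompacts_map.comp continuous_subtype_val

variable (T) in
/-- The points of the functional envelope which are graphs of continuous maps. -/
def graphPoints : Set ↥(FunctionalEnvelope T) :=
  {G | ∃ φ : T → T, Continuous φ ∧
    ((G : NonemptyCompacts (T × T)) : Set (T × T)) = graphOf φ}

theorem closure_graphPoints : closure (graphPoints T) = univ := by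
  refine eq_univ_of_forall fun G => ?_
  rw [closure_subtype]
  have h : Subtype.val '' graphPoints T = {G : NonemptyCompacts (T × T) | ∃ φ : T → T,
      Continuous φ ∧ (G : Set (T × T)) = graphOf φ} := by
    ext K
    exact ⟨fun ⟨_, h, e⟩ => e ▸ h, fun h => ⟨⟨K, subset_closure h⟩, h, rfl⟩⟩
  rw [h]
  exact G.2

theorem exists_graphPoint [CompactSpace T] [Nonempty T] {φ : T → T} (hφ : Continuous φ) :
    ∃ G : ↥(FunctionalEnvelope T),
      ((G : NonemptyCompacts (T × T)) : Set (T × T)) = graphOf φ := by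
  have h : graphOf φ = range fun x => (x, φ x) := by
    ext ⟨x, y⟩
    simp [graphOf, eq_comm]
  let K : NonemptyCompacts (T × T) :=
    ⟨⟨graphOf φ, h ▸ isCompact_range (by fun_prop)⟩, h ▸ range_nonempty _⟩
  exact ⟨⟨K, subset_closure ⟨φ, hφ, rfl⟩⟩, rfl⟩

theorem IsEnvelopeMap.dist_iterate_le (hF : IsEnvelopeMap f F) {G H : ↥(FunctionalEnvelope T)}
    {φ ψ : T → T} (hG : ((G : NonemptyCompacts (T × T)) : Set (T × T)) = graphOf φ)
    (hH : ((H : NonemptyCompacts (T × T)) : Set (T × T)) = graphOf ψ) {r : ℝ} (hr : 0 ≤ r) {k : ℕ}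
    (h1 : ∀ x, ∃ y, dist x y ≤ r ∧ dist (f^[k] (φ x)) (f^[k] (ψ y)) ≤ r)
    (h2 : ∀ x, ∃ y, dist x y ≤ r ∧ dist (f^[k] (ψ x)) (f^[k] (φ y)) ≤ r) :
    dist (F^[k] G) (F^[k] H) ≤ r := by
  rw [Subtype.dist_eq, NonemptyCompacts.dist_eq, hF.iterate, hF.iterate, hG, hH]
  refine hausdorffDist_le_of_mem_dist hr ?_ ?_
  · rintro _ ⟨⟨x, z⟩, hz, rfl⟩
    obtain rfl : z = φ x := hz
    obtain ⟨y, hxy, hy⟩ := h1 x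
    exact ⟨_, ⟨(y, ψ y), rfl, rfl⟩, max_le hxy hy⟩
  · rintro _ ⟨⟨x, z⟩, hz, rfl⟩
    obtain rfl : z = ψ x := hz
    obtain ⟨y, hxy, hy⟩ := h2 x
    exact ⟨_, ⟨(y, φ y), rfl, rfl⟩, max_le hxy hy⟩

theorem Codable.graphPoints (hF : IsEnvelopeMap f F) {ε : ℝ} (hε : 0 < ε) {n N : ℕ}
    (h : Codable {φ : T → T | Continuous φ} (fun φ ψ => ∀ k < n, ∀ x, ∃ y, dist x y ≤ 3 * ε ∧
        dist (f^[k] (φ x)) (f^[k] (ψ y)) ≤ 3 * ε) N) :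
    Codable (graphPoints T)
      (fun G H => (G, H) ∈ Dynamics.dynEntourage F {p | dist p.1 p.2 < 4 * ε} n) N := by
  classical
  let φ : ↥(FunctionalEnvelope T) → T → T := fun G =>
    if h : G ∈ _root_.graphPoints T then h.choose else id
  have hφ : ∀ G ∈ _root_.graphPoints T, Continuous (φ G) ∧
      ((G : NonemptyCompacts (T × T)) : Set (T × T)) = graphOf (φ G) := by
    intro G hG
    simp only [φ, dif_pos hG]
    exact hG.choose_spec
  refine (h.symm.comap φ fun G hG => (hφ G hG).1).mono subset_rfl le_rfl ?_
  rintro G hG H hH ⟨h1, h2⟩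
  refine Dynamics.mem_dynEntourage.2 fun k hk => ?_
  have := hF.dist_iterate_le (hφ G hG).2 (hφ H hH).2 (by positivity) (h1 k hk) (h2 k hk)
  exact this.trans_lt (by linarith)

theorem IsTreeSpace.coverEntropyEntourage_graphPoints_nonpos (hT : IsTreeSpace T)
    (hf : Continuous f) (h0 : entropy f = 0) (hF : IsEnvelopeMap f F) {ε : ℝ} (hε : 0 < ε) :
    Dynamics.coverEntropyEntourage F (graphPoints T) {p | dist p.1 p.2 < 4 * ε} ≤ 0 := by
  have := hT.compact
  obtain ⟨m, ⟨Γ⟩⟩ := hT.exists_arcCover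
  obtain ⟨J, _, P, D, hDfin, hP, hcov, hD⟩ := hT.exists_subdivision hε
  have := hDfin.fintype
  obtain ⟨d, hd⟩ : ∃ d, Fintype.card D = d := ⟨_, rfl⟩
  let V : Set (T × T) := {p | dist p.1 p.2 < ε}
  have hV : V ∈ uniformity T := dist_mem_uniformity hε
  have hs : ∀ n, ∃ s : Finset T, Dynamics.IsDynCoverOf f univ V n s ∧
      s.card = Dynamics.coverMincard f univ V n := fun n =>
    (Dynamics.coverMincard_finite_iff f univ V n).1
      (Dynamics.coverMincard_finite_of_isCompact_uniformContinuous isCompact_univ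
        (CompactSpace.uniformContinuous_of_continuous hf) hV n)
  choose s hs hcard using hs
  let u : ℕ → ENNReal := fun n => (Dynamics.coverMincard f univ V n).toENNReal
  have hu : ExpGrowth.expGrowthSup u ≤ 0 :=
    (Dynamics.coverEntropyEntourage_le_coverEntropy f univ hV).trans h0.le
  let v : ℕ → ENNReal := (fun n => ((n * d + 1 : ℕ) : ENNReal)) *
    (u * (fun n => ((n * Fintype.card J + 1 : ℕ) : ENNReal)) ^ (2 * m))
  have hv : ExpGrowth.expGrowthSup (v ^ Fintype.card J) ≤ 0 :=
    expGrowthSup_npow_nonpos (expGrowthSup_mul_nonpos (expGrowthSup_linear_le _)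
      (expGrowthSup_mul_nonpos hu (expGrowthSup_npow_nonpos (expGrowthSup_linear_le _) _))) _
  refine (ExpGrowth.expGrowthSup_monotone fun n => ?_).trans hv
  have h := (((hT.codable_orbits hf Γ (fun j => (hP j).2.2.2) hcov hD (hs n)).maps hP
    hcov).graphPoints hF hε).coverMincard_le
  rw [hd] at h
  refine (ENat.toENNReal_mono h).trans_eq ?_
  simp only [v, u, Pi.pow_apply, Pi.mul_apply, ← hcard]
  simp

theorem IsTreeSpace.entropy_envelope_eq_zero (hT : IsTreeSpace T) (hf : Continuous f)
    (h0 : entropy f = 0) (hF : IsEnvelopeMap f F) : entropy F = 0 := by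
  have := hT.compact
  have := hT.conn.toNonempty
  obtain ⟨G, -⟩ := exists_graphPoint (continuous_id (X := T))
  refine le_antisymm ?_ (Dynamics.coverEntropy_nonneg F ⟨G, mem_univ G⟩)
  rw [entropy, ← closure_graphPoints, Dynamics.coverEntropy_closure (hF.continuous hf),
    Dynamics.coverEntropy_eq_iSup_basis uniformity_basis_dist]
  refine iSup₂_le fun ε hε => ?_
  have h := hT.coverEntropyEntourage_graphPoints_nonpos hf h0 hF (ε := ε / 4) (by positivity)
  rwa [mul_div_cancel₀ _ (by norm_num : (4 : ℝ) ≠ 0)] at h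

end Envelope

section Interpolation

theorem exists_continuous_eq_near {T : Type*} [TopologicalSpace T] (hT : ∀ x y : T, Joined x y)
    (y : ℕ → T) (k : ℕ) : ∃ ψ : ℝ → T, Continuous ψ ∧
      (∀ i ≤ k, ∀ t : ℝ, |t - i| ≤ 1 / 4 → ψ t = y i) ∧ ∀ t : ℝ, k ≤ t → ψ t = y k := by
  induction k with
  | zero =>
    refine ⟨fun _ => y 0, continuous_const, fun i hi t _ => ?_, fun _ _ => rfl⟩
    rw [Nat.le_zero.1 hi]
  | succ k ih =>
    obtain ⟨ψ, hψ, h1, h2⟩ := ih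
    let p := (hT (y k) (y (k + 1))).somePath
    refine ⟨fun t => if t ≤ k + 1 / 4 then ψ t else p.extend (2 * (t - k - 1 / 4)),
      ?_, fun i hi t ht => ?_, fun t ht => ?_⟩
    · refine Continuous.if_le hψ (p.continuous_extend.comp (by fun_prop)) continuous_id
        continuous_const fun t ht => ?_
      rw [h2 t (by linarith), p.extend_of_le_zero (by linarith)]
    · rw [abs_le] at ht
      rcases hi.lt_or_eq with hi | rfl
      · have hi : i ≤ k := Nat.le_of_lt_succ hi
        have hi' : (i : ℝ) ≤ k := by exact_mod_cast hi
        simp only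
        rw [if_pos (by linarith), h1 i hi t (abs_le.2 ht)]
      · push_cast at ht
        simp only
        rw [if_neg (by linarith), p.extend_of_one_le (by linarith)]
    · push_cast at ht
      simp only
      rw [if_neg (by linarith), p.extend_of_one_le (by linarith)]

theorem IsTreeSpace.exists_locally_constant_interpolation {T : Type*} [MetricSpace T]
    (hT : IsTreeSpace T) [Nontrivial T] (k : ℕ) : ∃ δ > 0, ∃ x : Fin k → T, ∀ y : Fin k → T,
      ∃ φ : T → T, Continuous φ ∧ ∀ i z, dist z (x i) < δ → φ z = y i := by
  have := hT.compact
  have := hT.conn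
  obtain ⟨a, b, hab⟩ := exists_pair_ne T
  let u : T → ℝ := fun z => dist z a * (k / dist b a)
  have hu : Continuous u := by fun_prop
  have hba : dist b a ≠ 0 := dist_ne_zero.2 hab.symm
  have hsurj : Icc (0 : ℝ) k ⊆ range u :=
    (isPreconnected_range hu).Icc_subset ⟨a, by simp [u]⟩ ⟨b, by simp only [u]; field_simp⟩
  have hx : ∀ i : Fin k, ∃ z, u z = (i : ℕ) := fun i =>
    hsurj ⟨Nat.cast_nonneg _, by exact_mod_cast i.2.le⟩
  choose x hx using hx
  obtain ⟨δ, hδ, hδu⟩ := Metric.uniformContinuous_iff.1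
    (CompactSpace.uniformContinuous_of_continuous hu) (1 / 4) (by norm_num)
  refine ⟨δ, hδ, x, fun y => ?_⟩
  obtain ⟨ψ, hψ, h, -⟩ := exists_continuous_eq_near hT.joined
    (fun i => if h : i < k then y ⟨i, h⟩ else a) k
  refine ⟨ψ ∘ u, hψ.comp hu, fun i z hz => ?_⟩
  have h1 := hδu hz
  rw [hx, Real.dist_eq] at h1
  rw [Function.comp_apply, h i i.2.le _ h1.le, dif_pos i.2]

end Interpolation

section PositiveEntropy

variable {T : Type*} [MetricSpace T] {f : T → T}
  {F : ↥(FunctionalEnvelope T) → ↥(FunctionalEnvelope T)}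

theorem IsTreeSpace.netMaxcard_pow_le (hT : IsTreeSpace T) [Nontrivial T] (hf : Continuous f)
    (hF : IsEnvelopeMap f F) {V : Set (T × T)} (hV : V ∈ uniformity T) (k : ℕ) :
    ∃ W ∈ uniformity ↥(FunctionalEnvelope T), ∀ n,
      Dynamics.netMaxcard f univ V n ^ k ≤ Dynamics.coverMincard F univ W n := by
  have := hT.compact
  obtain ⟨ε, hε, hεV⟩ := Metric.mem_uniformity_dist.1 hV
  obtain ⟨δ, hδ, x, hx⟩ := hT.exists_locally_constant_interpolation k
  refine ⟨_, dist_mem_uniformity (half_pos (lt_min hδ hε)), fun n => ?_⟩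
  rcases eq_top_or_lt_top (Dynamics.coverMincard F univ
    {p | dist p.1 p.2 < min δ ε / 2} n) with h | h
  · exact h ▸ le_top
  obtain ⟨s, hs, hscard⟩ := (Dynamics.coverMincard_finite_iff _ _ _ _).1 h
  obtain ⟨E, hE, hEcard⟩ := (Dynamics.netMaxcard_finite_iff f univ V n).1
    ((Dynamics.netMaxcard_le_coverMincard f univ n).trans_lt
      (Dynamics.coverMincard_finite_of_isCompact_uniformContinuous isCompact_univ
        (CompactSpace.uniformContinuous_of_continuous hf) hV n))
  have hc : ∀ e : Fin k → E, ∃ c : s, ∃ φ : T → T, ∃ G : ↥(FunctionalEnvelope T),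
      ((G : NonemptyCompacts (T × T)) : Set (T × T)) = graphOf φ ∧
      (∀ i z, dist z (x i) < δ → φ z = e i) ∧
      ∀ j < n, dist (F^[j] G) (F^[j] c) < min δ ε / 2 := by
    intro e
    obtain ⟨φ, hφ, hφx⟩ := hx fun i => e i
    obtain ⟨G, hG⟩ := exists_graphPoint hφ
    obtain ⟨c, hcs, hc⟩ := hs (mem_univ G)
    exact ⟨⟨c, hcs⟩, φ, G, hG, hφx, fun j hj => Dynamics.mem_dynEntourage.1 hc j hj⟩
  choose c φ G hG hφ hcG using hc
  have hinj : Function.Injective c := by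
    intro e e' hee
    funext i
    have hdist : ∀ j < n, dist (f^[j] (e i)) (f^[j] (e' i)) < ε := by
      intro j hj
      have h1 : dist (F^[j] (G e)) (F^[j] (G e')) < min δ ε := by
        have h2 := hcG e j hj
        have h3 := hcG e' j hj
        rw [← hee] at h3
        linarith [dist_triangle_right (F^[j] (G e)) (F^[j] (G e')) (F^[j] (c e))]
      rw [Subtype.dist_eq, NonemptyCompacts.dist_eq] at h1
      have hmem : (x i, f^[j] (e i)) ∈
          ((F^[j] (G e) : NonemptyCompacts (T × T)) : Set (T × T)) := by
        rw [hF.iterate, hG]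
        exact ⟨(x i, e i), (hφ e i (x i) (by simpa using hδ)).symm, rfl⟩
      obtain ⟨p, hp, hlt⟩ := exists_dist_lt_of_hausdorffDist_lt hmem h1
        (hausdorffEDist_ne_top_of_nonempty_of_bounded (NonemptyCompacts.nonempty _)
          (NonemptyCompacts.nonempty _) (NonemptyCompacts.isCompact _).isBounded
          (NonemptyCompacts.isCompact _).isBounded)
      rw [hF.iterate, hG] at hp
      obtain ⟨⟨z, w⟩, hw, rfl⟩ := hp
      obtain rfl : w = φ e' z := hw
      obtain ⟨hz, hw⟩ := max_lt_iff.1 hlt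
      rw [dist_comm] at hz
      have hz : dist z (x i) < δ := hz.trans_le (min_le_left _ _)
      have hw : dist (f^[j] (e i)) (f^[j] (φ e' z)) < min δ ε := hw
      rw [hφ e' i z hz] at hw
      exact hw.trans_le (min_le_right _ _)
    by_contra hne
    have hdisj := hE.2 (e i).2 (e' i).2 fun h => hne (Subtype.ext h)
    have h1 : (e' i : T) ∈ UniformSpace.ball (e i : T) (Dynamics.dynEntourage f V n) :=
      Dynamics.mem_dynEntourage.2 fun j hj => hεV (hdist j hj)
    have h2 : (e' i : T) ∈ UniformSpace.ball (e' i : T) (Dynamics.dynEntourage f V n) :=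
      Dynamics.mem_dynEntourage.2 fun j hj => hεV (by simpa using hε)
    exact disjoint_left.1 hdisj h1 h2
  have hcard := Fintype.card_le_of_injective c hinj
  rw [Fintype.card_fun, Fintype.card_coe, Fintype.card_coe, Fintype.card_fin] at hcard
  rw [← hscard, ← hEcard]
  exact_mod_cast hcard

theorem entropy_nonpos_of_subsingleton {X : Type*} [MetricSpace X] [Subsingleton X] (g : X → X) :
    entropy g ≤ 0 := by
  refine iSup₂_le fun U hU => ?_
  have h : ∀ n, Dynamics.coverMincard g univ U n ≤ 1 := by
    intro n
    rcases isEmpty_or_nonempty X with hX | ⟨⟨x⟩⟩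
    · rw [(Dynamics.coverMincard_eq_zero_iff g univ U n).2 (univ_eq_empty_iff.2 hX)]
      exact zero_le_one
    · have hcov : Dynamics.IsDynCoverOf g univ U n (({x} : Finset X) : Set X) := fun y _ =>
        ⟨x, by simp, Dynamics.mem_dynEntourage.2 fun k _ => by
          rw [Subsingleton.elim y x]
          exact refl_mem_uniformity hU⟩
      simpa using hcov.coverMincard_le_card
  refine (ExpGrowth.expGrowthSup_monotone fun n => ENat.toENNReal_mono (h n)).trans ?_
  simp only [ENat.toENNReal_one]
  exact (ExpGrowth.expGrowthSup_const one_ne_zero ENNReal.one_ne_top).le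

theorem IsTreeSpace.entropy_envelope_eq_top (hT : IsTreeSpace T) (hf : Continuous f)
    (h0 : 0 < entropy f) (hF : IsEnvelopeMap f F) : entropy F = ⊤ := by
  rcases subsingleton_or_nontrivial T with h | h
  · exact absurd h0 (entropy_nonpos_of_subsingleton f).not_gt
  obtain ⟨c, hc0, hc⟩ := EReal.lt_iff_exists_real_btwn.1 h0
  have hc0 : 0 < c := by exact_mod_cast hc0
  rw [entropy, Dynamics.coverEntropy_eq_iSup_netEntropyEntourage] at hc
  obtain ⟨V, hc⟩ := lt_iSup_iff.1 hc
  obtain ⟨hV, hc⟩ := lt_iSup_iff.1 hc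
  have hfreq := ExpGrowth.frequently_exp_le hc
  rw [EReal.eq_top_iff_forall_lt]
  intro y
  obtain ⟨k, hk⟩ := exists_nat_gt (y / c)
  rw [div_lt_iff₀ hc0] at hk
  obtain ⟨W, hW, hle⟩ := hT.netMaxcard_pow_le hf hF hV k
  have hkc : ((k * c : ℝ) : EReal) ≤ Dynamics.coverEntropyEntourage F univ W := by
    refine Frequently.le_expGrowthSup (hfreq.mono fun n hn => ?_)
    have h1 : ((k * c : ℝ) : EReal) * (n : EReal) = (k : EReal) * ((c : EReal) * (n : EReal)) := by
      push_cast
      rw [mul_assoc]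
    rw [h1, EReal.exp_nmul]
    refine (pow_le_pow_left₀ zero_le hn k).trans ?_
    have h2 := ENat.toENNReal_mono (hle n)
    simpa using h2
  refine (EReal.coe_lt_coe_iff.2 hk).trans_le (hkc.trans ?_)
  exact Dynamics.coverEntropyEntourage_le_coverEntropy F univ hW

end PositiveEntropy

/-- zero entropy of a tree map gives zero entropy of its
functional envelope; positive entropy gives infinite entropy. -/
theorem entropy_functional_envelope {T : Type*} [MetricSpace T]
    (hT : IsTreeSpace T) (f : T → T) (hf : Continuous f) :
    (entropy f = 0 →
      ∀ F : ↥(FunctionalEnvelope T) → ↥(FunctionalEnvelope T),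
        IsEnvelopeMap f F → entropy F = 0) ∧
    (0 < entropy f →
      ∀ F : ↥(FunctionalEnvelope T) → ↥(FunctionalEnvelope T),
        IsEnvelopeMap f F → entropy F = ⊤) := by
  exact ⟨fun h0 F hF => hT.entropy_envelope_eq_zero hf h0 hF,
    fun h0 F hF => hT.entropy_envelope_eq_top hf h0 hF⟩
end

section
/- The map g : [0,1]² → [0,1]² given by g(x,y) = (x, y²) has topological entropy zero, but the induced map F on the functional envelope of ([0,1]², g) (the closure of continuous self-maps of the square in the Hausdorff metric on graphs) has infinite topological entropy. -/
open Set Filter Metric Topology TopologicalSpace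

/-- The squaring map on `[0,1]`. -/
noncomputable def sqI : ↥(Set.Icc (0:ℝ) 1) → ↥(Set.Icc (0:ℝ) 1) :=
  fun y => ⟨(y : ℝ) ^ 2, ⟨by positivity, by nlinarith [y.2.1, y.2.2]⟩⟩

/-- The map `g(x,y) = (x, y²)` on the square `[0,1]²`. -/
noncomputable def gSquare :
    (↥(Set.Icc (0:ℝ) 1) × ↥(Set.Icc (0:ℝ) 1)) →
      (↥(Set.Icc (0:ℝ) 1) × ↥(Set.Icc (0:ℝ) 1)) :=
  fun p => (p.1, sqI p.2)

open Dynamics ExpGrowth in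
/-- Polynomially growing sequences have nonpositive exponential growth rate. -/
lemma expGrowthSup_polynomial_le_zero (C M : ℕ) :
    expGrowthSup (fun n : ℕ => ((C * (n + 1) ^ M : ℕ) : ENNReal)) ≤ 0 := by
  have key : expGrowthSup (fun n : ℕ => ((n ^ M : ℕ) : ENNReal)) ≤ 0 := by
    refine expGrowthSup_le_iff.2 fun b hb => ?_
    obtain ⟨r, hr0, hrb⟩ := EReal.lt_iff_exists_real_btwn.1 hb
    have hr0' : 0 < r := by exact_mod_cast hr0
    have hlt : (1 : ℝ) < Real.exp r := Real.one_lt_exp_iff.2 hr0'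
    have := (isLittleO_pow_const_const_pow_of_one_lt (R := ℝ) M hlt).bound (c := 1) one_pos
    filter_upwards [this] with n hn
    have hn' : ((n ^ M : ℕ) : ℝ) ≤ Real.exp (r * n) := by
      rw [mul_comm r, Real.exp_nat_mul]
      simpa [abs_of_pos (Real.exp_pos r)] using hn
    calc ((n ^ M : ℕ) : ENNReal) = ENNReal.ofReal ((n ^ M : ℕ) : ℝ) := by
          rw [ENNReal.ofReal_natCast]
      _ ≤ ENNReal.ofReal (Real.exp (r * n)) := ENNReal.ofReal_le_ofReal hn'
      _ = EReal.exp ((r : EReal) * n) := by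
          rw [← EReal.exp_coe]
          push_cast
          rfl
      _ ≤ EReal.exp (b * n) := by gcongr
  refine le_trans (expGrowthSup_le_of_eventually_le (b := ((C * 2 ^ M : ℕ) : ENNReal))
    (ENNReal.natCast_ne_top _) ?_) key
  filter_upwards [eventually_ge_atTop 1] with n hn
  rw [← Nat.cast_mul]
  refine Nat.cast_le.2 ?_
  rw [mul_assoc, ← mul_pow]
  gcongr
  omega

/-- Antitone sequences of naturals with equal level counts agree. -/
lemma le_of_card_superlevel_eq {u v : ℕ → ℕ} (hu : Antitone u) (hv : Antitone v) {n j : ℕ}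
    (hj : j < n)
    (h : ((Finset.range n).filter (fun i => u j ≤ u i)).card =
      ((Finset.range n).filter (fun i => u j ≤ v i)).card) : u j ≤ v j := by
  by_contra hlt
  have h1 : Finset.range (j + 1) ⊆ (Finset.range n).filter (fun i => u j ≤ u i) := by
    intro i hi
    simp only [Finset.mem_range, Finset.mem_filter] at hi ⊢
    exact ⟨by omega, hu (by omega)⟩
  have h2 : (Finset.range n).filter (fun i => u j ≤ v i) ⊆ Finset.range j := by
    intro i hi
    simp only [Finset.mem_range, Finset.mem_filter] at hi ⊢
    by_contra hij
    exact hlt (hi.2.trans (hv (by omega)))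
  have h1' := Finset.card_le_card h1
  have h2' := Finset.card_le_card h2
  simp only [Finset.card_range] at h1' h2'
  omega

lemma abs_sub_lt_inv_of_floor_eq {N : ℕ} (hN : 0 < N) {a b : ℝ} (ha : 0 ≤ a) (hb : 0 ≤ b)
    (h : ⌊N * a⌋₊ = ⌊N * b⌋₊) : |a - b| < 1 / N := by
  have hN' : (0 : ℝ) < N := by exact_mod_cast hN
  have a1 := Nat.floor_le (mul_nonneg hN'.le ha)
  have a2 := Nat.lt_floor_add_one (N * a)
  have b1 := Nat.floor_le (mul_nonneg hN'.le hb)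
  have b2 := Nat.lt_floor_add_one (N * b)
  rw [h] at a1 a2
  rw [lt_div_iff₀ hN', ← abs_of_pos hN', ← abs_mul, abs_lt]
  constructor <;> nlinarith

lemma coe_sqI_iterate (j : ℕ) (y : ↥(Set.Icc (0:ℝ) 1)) :
    ((sqI^[j] y : ↥(Set.Icc (0:ℝ) 1)) : ℝ) = (y : ℝ) ^ 2 ^ j := by
  induction j with
  | zero => simp
  | succ j ih =>
    rw [Function.iterate_succ_apply', pow_succ, pow_mul, ← ih]
    rfl

lemma gSquare_iterate (j : ℕ) (p : ↥(Set.Icc (0:ℝ) 1) × ↥(Set.Icc (0:ℝ) 1)) :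
    gSquare^[j] p = (p.1, sqI^[j] p.2) := by
  induction j with
  | zero => rfl
  | succ j ih => rw [Function.iterate_succ_apply', ih, Function.iterate_succ_apply']; rfl

/-- The level in `{0, …, N}` of the `j`-th iterate of `y` under squaring. -/
noncomputable def sqLevel (N : ℕ) (y : ↥(Set.Icc (0:ℝ) 1)) (j : ℕ) : ℕ :=
  ⌊(N : ℝ) * (y : ℝ) ^ 2 ^ j⌋₊

lemma sqLevel_antitone (N : ℕ) (y : ↥(Set.Icc (0:ℝ) 1)) : Antitone (sqLevel N y) := by
  intro i j hij
  refine Nat.floor_mono (mul_le_mul_of_nonneg_left ?_ N.cast_nonneg)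
  exact pow_le_pow_of_le_one y.2.1 y.2.2 (Nat.pow_le_pow_right two_pos hij)

lemma sqLevel_le (N : ℕ) (y : ↥(Set.Icc (0:ℝ) 1)) (j : ℕ) : sqLevel N y j ≤ N := by
  refine Nat.floor_le_of_le ?_
  exact mul_le_of_le_one_right N.cast_nonneg (pow_le_one₀ y.2.1 y.2.2)

/-- A finite code determining the length `n` orbit of a point of the square under
`gSquare` up to `1 / N`. -/
noncomputable def gSquareCode (N n : ℕ) (p : ↥(Set.Icc (0:ℝ) 1) × ↥(Set.Icc (0:ℝ) 1)) :
    Fin (N + 1) × (Fin (N + 1) → Fin (n + 1)) :=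
  (⟨sqLevel N p.1 0, Nat.lt_succ_of_le (sqLevel_le N p.1 0)⟩,
    fun k => ⟨((Finset.range n).filter (fun i => (k : ℕ) ≤ sqLevel N p.2 i)).card,
      Nat.lt_succ_of_le ((Finset.card_filter_le _ _).trans_eq (Finset.card_range n))⟩)

lemma dist_gSquare_iterate_lt {N n : ℕ} (hN : 0 < N)
    {p q : ↥(Set.Icc (0:ℝ) 1) × ↥(Set.Icc (0:ℝ) 1)}
    (h : gSquareCode N n p = gSquareCode N n q) {j : ℕ} (hj : j < n) :
    dist (gSquare^[j] p) (gSquare^[j] q) < 1 / N := by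
  have h1 : sqLevel N p.1 0 = sqLevel N q.1 0 := congrArg (fun c => (c.1 : ℕ)) h
  have h2 (k : ℕ) (hk : k ≤ N) :
      ((Finset.range n).filter (fun i => k ≤ sqLevel N p.2 i)).card =
        ((Finset.range n).filter (fun i => k ≤ sqLevel N q.2 i)).card :=
    congrArg (fun c => (c.2 ⟨k, Nat.lt_succ_of_le hk⟩ : ℕ)) h
  have h3 : sqLevel N p.2 j = sqLevel N q.2 j :=
    le_antisymm
      (le_of_card_superlevel_eq (sqLevel_antitone N _) (sqLevel_antitone N _) hj
        (h2 _ (sqLevel_le N _ _)))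
      (le_of_card_superlevel_eq (sqLevel_antitone N _) (sqLevel_antitone N _) hj
        (h2 _ (sqLevel_le N _ _)).symm)
  rw [gSquare_iterate, gSquare_iterate, Prod.dist_eq, max_lt_iff]
  constructor
  · rw [Subtype.dist_eq, Real.dist_eq]
    refine abs_sub_lt_inv_of_floor_eq hN p.1.2.1 q.1.2.1 ?_
    simpa [sqLevel] using h1
  · rw [Subtype.dist_eq, Real.dist_eq, coe_sqI_iterate, coe_sqI_iterate]
    exact abs_sub_lt_inv_of_floor_eq hN (pow_nonneg p.2.2.1 _) (pow_nonneg q.2.2.1 _) h3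

open Dynamics in
lemma netMaxcard_gSquare_le (N n : ℕ) (hN : 0 < N) :
    netMaxcard gSquare Set.univ {p | dist p.1 p.2 < 1 / (N : ℝ)} n ≤
      (((N + 1) * (n + 1) ^ (N + 1) : ℕ) : ℕ∞) := by
  have hN' : (0 : ℝ) < 1 / N := by positivity
  refine iSup₂_le fun s hs => Nat.cast_le.2 ?_
  have hinj : Set.InjOn (gSquareCode N n) s := by
    intro p hp q hq hpq
    refine PairwiseDisjoint.elim_set hs.2 hp hq q ?_ ?_
    · exact mem_ball_dynEntourage.2 fun j hj => dist_gSquare_iterate_lt hN hpq hj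
    · exact mem_ball_dynEntourage.2 fun j _ => by
        simpa [UniformSpace.ball] using hN'
  have := Finset.card_le_card_of_injOn (t := Finset.univ) (gSquareCode N n)
    (fun _ _ => Finset.mem_coe.2 (Finset.mem_univ _)) hinj
  simpa using this

open Dynamics ExpGrowth in
lemma entropy_gSquare : entropy gSquare = 0 := by
  refine le_antisymm ?_ (coverEntropy_nonneg _ ⟨(0, 0), trivial⟩)
  rw [entropy, coverEntropy_eq_iSup_basis_netEntropyEntourage
    Metric.uniformity_basis_dist_inv_nat_succ]
  refine iSup₂_le fun N _ => ?_
  refine le_trans (expGrowthSup_monotone fun n => ?_)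
    (expGrowthSup_polynomial_le_zero (N + 1 + 1) (N + 1 + 1))
  have h := netMaxcard_gSquare_le (N + 1) n N.succ_pos
  rw [Nat.cast_succ] at h
  simpa using ENat.toENNReal_mono h

open Dynamics ExpGrowth in
/-- If for every `n` there is a family of `k ^ n` points which are `(n, ε)`-separated,
then the entropy is at least `log k`. -/
lemma log_le_entropy_of_separated {X : Type*} [MetricSpace X] (f : X → X) (k : ℕ) {ε : ℝ}
    (hε : 0 < ε)
    (h : ∀ n : ℕ, ∃ c : (Fin n → Fin k) → X, ∀ a b, a ≠ b →
      ∃ j < n, ε ≤ dist (f^[j] (c a)) (f^[j] (c b))) :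
    ENNReal.log (k : ENNReal) ≤ entropy f := by
  classical
  have hU : {p : X × X | dist p.1 p.2 < ε / 2} ∈ uniformity X :=
    Metric.dist_mem_uniformity (half_pos hε)
  refine le_trans ?_ (netEntropyEntourage_le_coverEntropy f Set.univ hU)
  rw [← expGrowthSup_pow]
  refine expGrowthSup_monotone fun n => ?_
  obtain ⟨c, hc⟩ := h n
  have hinj : Function.Injective c := by
    intro a b hab
    by_contra hne
    obtain ⟨j, -, hj⟩ := hc a b hne
    rw [hab, dist_self] at hj
    linarith
  have hnet : IsDynNetIn f Set.univ {p : X × X | dist p.1 p.2 < ε / 2} n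
      (Finset.univ.image c : Finset X) := by
    refine ⟨Set.subset_univ _, ?_⟩
    rintro x hx y hy hxy
    simp only [Finset.coe_image, Finset.coe_univ, Set.image_univ, Set.mem_range] at hx hy
    obtain ⟨a, rfl⟩ := hx
    obtain ⟨b, rfl⟩ := hy
    obtain ⟨j, hjn, hj⟩ := hc a b fun hab => hxy (congrArg c hab)
    refine Set.disjoint_left.2 fun z hz1 hz2 => ?_
    have d1 : dist (f^[j] (c a)) (f^[j] z) < ε / 2 := mem_ball_dynEntourage.1 hz1 j hjn
    have d2 : dist (f^[j] (c b)) (f^[j] z) < ε / 2 := mem_ball_dynEntourage.1 hz2 j hjn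
    have := dist_triangle_right (f^[j] (c a)) (f^[j] (c b)) (f^[j] z)
    linarith
  have hcard := ENat.toENNReal_mono hnet.card_le_netMaxcard
  rw [Finset.card_image_of_injective _ hinj] at hcard
  simpa using hcard

/-- A bump function supported near `1/2`. -/
noncomputable def halfBump (v : ℝ) : ℝ := max 0 (min 1 (2 - 20 * |v - 1 / 2|))

lemma continuous_halfBump : Continuous halfBump := by
  unfold halfBump
  fun_prop

lemma halfBump_eq_one {v : ℝ} (h : |v - 1 / 2| ≤ 1 / 20) : halfBump v = 1 := by
  rw [halfBump, min_eq_left (by linarith), max_eq_right zero_le_one]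

lemma halfBump_eq_zero {v : ℝ} (h : 1 / 10 ≤ |v - 1 / 2|) : halfBump v = 0 :=
  max_eq_left ((min_le_right _ _).trans (by linarith))

lemma pow_two_pow_le_sq {s : ℝ} (h0 : 0 ≤ s) (h1 : s ≤ 1) {i j : ℕ} (hij : i < j) :
    s ^ 2 ^ j ≤ (s ^ 2 ^ i) ^ 2 := by
  rw [← pow_mul, ← pow_succ]
  exact pow_le_pow_of_le_one h0 h1 (Nat.pow_le_pow_right two_pos hij)

lemma halfBump_pow_eq_zero {s : ℝ} (h0 : 0 ≤ s) (h1 : s ≤ 1) {i j : ℕ} (hij : i ≠ j)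
    (h : |s ^ 2 ^ j - 1 / 2| ≤ 1 / 20) : halfBump (s ^ 2 ^ i) = 0 := by
  have hi : 0 ≤ s ^ 2 ^ i := pow_nonneg h0 _
  have hj : 0 ≤ s ^ 2 ^ j := pow_nonneg h0 _
  obtain ⟨hl, hr⟩ := abs_le.1 h
  refine halfBump_eq_zero (le_abs.2 ?_)
  rcases hij.lt_or_gt with hlt | hlt
  · have := pow_two_pow_le_sq h0 h1 hlt
    left
    nlinarith
  · have := pow_two_pow_le_sq h0 h1 hlt
    right
    nlinarith

/-- A continuous function on `[0,1]` equal to `c j / k` where the `j`-th iterate under squaring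
is close to `1/2`. -/
noncomputable def wordFun {n k : ℕ} (c : Fin n → Fin k) (s : ↥(Set.Icc (0:ℝ) 1)) :
    ↥(Set.Icc (0:ℝ) 1) :=
  Set.projIcc 0 1 zero_le_one (∑ j : Fin n, ((c j : ℕ) : ℝ) / k * halfBump ((s : ℝ) ^ 2 ^ (j : ℕ)))

lemma continuous_wordFun {n k : ℕ} (c : Fin n → Fin k) : Continuous (wordFun c) := by
  refine continuous_projIcc.comp (continuous_finsetSum _ fun j _ => continuous_const.mul ?_)
  exact continuous_halfBump.comp (by fun_prop)

lemma coe_wordFun {n k : ℕ} (c : Fin n → Fin k) (j : Fin n) (s : ↥(Set.Icc (0:ℝ) 1))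
    (h : |(s : ℝ) ^ 2 ^ (j : ℕ) - 1 / 2| ≤ 1 / 20) :
    (wordFun c s : ℝ) = ((c j : ℕ) : ℝ) / k := by
  have hsum : ∑ i : Fin n, ((c i : ℕ) : ℝ) / k * halfBump ((s : ℝ) ^ 2 ^ (i : ℕ)) =
      ((c j : ℕ) : ℝ) / k := by
    rw [Finset.sum_eq_single j, halfBump_eq_one h, mul_one]
    · intro i _ hij
      rw [halfBump_pow_eq_zero s.2.1 s.2.2 (fun e => hij (Fin.ext e)) h, mul_zero]
    · simp
  have hk : ((c j : ℕ) : ℝ) ≤ k := by exact_mod_cast (c j).2.le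
  rw [wordFun, hsum, Set.projIcc_of_mem zero_le_one
    ⟨by positivity, div_le_one_of_le₀ hk (Nat.cast_nonneg k)⟩]

/-- The graph of a continuous self-map of a compact space as an element of the functional
envelope. -/
noncomputable def envelopeGraph {X : Type*} [MetricSpace X] [CompactSpace X] [Nonempty X]
    (φ : X → X) (hφ : Continuous φ) : ↥(FunctionalEnvelope X) :=
  ⟨⟨⟨graphOf φ, (isClosed_eq continuous_snd (hφ.comp continuous_fst)).isCompact⟩,
    ⟨(Classical.arbitrary X, φ (Classical.arbitrary X)), rfl⟩⟩,
    subset_closure ⟨φ, hφ, rfl⟩⟩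

lemma IsEnvelopeMap.coe_iterate {X : Type*} [MetricSpace X] {f : X → X}
    {F : ↥(FunctionalEnvelope X) → ↥(FunctionalEnvelope X)} (hF : IsEnvelopeMap f F)
    (G : ↥(FunctionalEnvelope X)) (j : ℕ) :
    ((F^[j] G : NonemptyCompacts (X × X)) : Set (X × X)) =
      Prod.map id f^[j] '' ((G : NonemptyCompacts (X × X)) : Set (X × X)) := by
  induction j with
  | zero => simp
  | succ j ih =>
    rw [Function.iterate_succ_apply', hF, ih, Set.image_image]
    refine Set.image_congr fun p _ => ?_
    simp only [Prod.map, id, Function.iterate_succ_apply']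

/-- Iterates of graphs in the functional envelope which are close in the Hausdorff distance. -/
lemma IsEnvelopeMap.exists_dist_lt {X : Type*} [MetricSpace X] [CompactSpace X] [Nonempty X]
    {f : X → X} {F : ↥(FunctionalEnvelope X) → ↥(FunctionalEnvelope X)} (hF : IsEnvelopeMap f F)
    {φ ψ : X → X} (hφ : Continuous φ) (hψ : Continuous ψ) {j : ℕ} {ε : ℝ}
    (h : dist (F^[j] (envelopeGraph φ hφ)) (F^[j] (envelopeGraph ψ hψ)) < ε) (p : X) :
    ∃ q : X, dist (f^[j] (φ p)) (f^[j] (ψ q)) < ε := by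
  rw [Subtype.dist_eq, NonemptyCompacts.dist_eq] at h
  have hp : (p, f^[j] (φ p)) ∈
      ((F^[j] (envelopeGraph φ hφ) : NonemptyCompacts (X × X)) : Set (X × X)) := by
    rw [hF.coe_iterate]
    exact ⟨(p, φ p), rfl, rfl⟩
  obtain ⟨y, hy, hd⟩ := exists_dist_lt_of_hausdorffDist_lt hp h
    (hausdorffEDist_ne_top_of_nonempty_of_bounded (NonemptyCompacts.nonempty _)
      (NonemptyCompacts.nonempty _) (NonemptyCompacts.isCompact _).isBounded
      (NonemptyCompacts.isCompact _).isBounded)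
  rw [hF.coe_iterate] at hy
  obtain ⟨⟨q, r⟩, hr, rfl⟩ := hy
  obtain rfl : r = ψ q := hr
  exact ⟨q, (le_max_right _ _).trans_lt hd⟩

/-- A continuous self-map of the square encoding a word. -/
noncomputable def wordMap {n k : ℕ} (c : Fin n → Fin k)
    (p : ↥(Set.Icc (0:ℝ) 1) × ↥(Set.Icc (0:ℝ) 1)) :
    ↥(Set.Icc (0:ℝ) 1) × ↥(Set.Icc (0:ℝ) 1) := (wordFun c p.1, p.1)

lemma continuous_wordMap {n k : ℕ} (c : Fin n → Fin k) : Continuous (wordMap c) :=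
  ((continuous_wordFun c).comp continuous_fst).prodMk continuous_fst

lemma exists_pow_two_pow_eq_half (j : ℕ) :
    ∃ s : ↥(Set.Icc (0:ℝ) 1), (s : ℝ) ^ 2 ^ j = 1 / 2 := by
  refine ⟨⟨(1 / 2 : ℝ) ^ ((2 ^ j : ℕ) : ℝ)⁻¹, by positivity,
    Real.rpow_le_one (by norm_num) (by norm_num) (by positivity)⟩, ?_⟩
  exact Real.rpow_inv_natCast_pow (by norm_num) (by positivity)

lemma wordMap_separated
    {F : ↥(FunctionalEnvelope (↥(Set.Icc (0:ℝ) 1) × ↥(Set.Icc (0:ℝ) 1))) →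
        ↥(FunctionalEnvelope (↥(Set.Icc (0:ℝ) 1) × ↥(Set.Icc (0:ℝ) 1)))}
    (hF : IsEnvelopeMap gSquare F) {n k : ℕ} {a b : Fin n → Fin k} {j : Fin n}
    (hab : a j ≠ b j) :
    1 / (20 * k) ≤ dist (F^[j] (envelopeGraph _ (continuous_wordMap a)))
      (F^[j] (envelopeGraph _ (continuous_wordMap b))) := by
  by_contra! hlt
  have hk : (1 : ℝ) ≤ k := by exact_mod_cast (Nat.zero_le _).trans_lt (a j).2
  obtain ⟨s, hs⟩ := exists_pow_two_pow_eq_half j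
  obtain ⟨q, hq⟩ := hF.exists_dist_lt _ _ hlt (s, 0)
  rw [gSquare_iterate, gSquare_iterate, Prod.dist_eq, max_lt_iff, Subtype.dist_eq,
    Subtype.dist_eq, Real.dist_eq, Real.dist_eq, coe_sqI_iterate, coe_sqI_iterate] at hq
  obtain ⟨h1, h2⟩ := hq
  simp only [wordMap] at h1 h2
  have hε : 1 / (20 * k : ℝ) ≤ 1 / 20 :=
    one_div_le_one_div_of_le (by norm_num) (by linarith)
  rw [hs, abs_sub_comm] at h2
  rw [coe_wordFun a j s (by rw [hs]; norm_num), coe_wordFun b j q.1 (h2.le.trans hε),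
    ← sub_div, abs_div, abs_of_pos (by linarith : (0 : ℝ) < k),
    div_lt_div_iff₀ (by linarith) (by linarith)] at h1
  have h3 : (1 : ℝ) ≤ |((a j : ℕ) : ℝ) - ((b j : ℕ) : ℝ)| := by
    have : (1 : ℤ) ≤ |((a j : ℕ) : ℤ) - ((b j : ℕ) : ℤ)| :=
      Int.one_le_abs (sub_ne_zero.2 fun e => hab (Fin.ext (by exact_mod_cast e)))
    exact_mod_cast this
  nlinarith

lemma log_le_entropy_envelope
    {F : ↥(FunctionalEnvelope (↥(Set.Icc (0:ℝ) 1) × ↥(Set.Icc (0:ℝ) 1))) →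
        ↥(FunctionalEnvelope (↥(Set.Icc (0:ℝ) 1) × ↥(Set.Icc (0:ℝ) 1)))}
    (hF : IsEnvelopeMap gSquare F) {k : ℕ} (hk : 0 < k) :
    ENNReal.log (k : ENNReal) ≤ entropy F := by
  have hk' : (0 : ℝ) < k := by exact_mod_cast hk
  refine log_le_entropy_of_separated F k (ε := 1 / (20 * k)) (by positivity) fun n =>
    ⟨fun c => envelopeGraph _ (continuous_wordMap c), fun a b hab => ?_⟩
  obtain ⟨j, hj⟩ := Function.ne_iff.1 hab
  exact ⟨j, j.2, wordMap_separated hF hj⟩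

/-- `g(x,y) = (x,y²)` has zero entropy, but the induced map on
its functional envelope has infinite entropy. -/
theorem gSquare_entropy_zero_envelope_infinite :
    entropy gSquare = 0 ∧
    ∀ F : ↥(FunctionalEnvelope (↥(Set.Icc (0:ℝ) 1) × ↥(Set.Icc (0:ℝ) 1))) →
        ↥(FunctionalEnvelope (↥(Set.Icc (0:ℝ) 1) × ↥(Set.Icc (0:ℝ) 1))),
      IsEnvelopeMap gSquare F → entropy F = ⊤ := by
  refine ⟨entropy_gSquare, fun F hF => ?_⟩
  have h (k : ℕ) (hk : 0 < k) : (k : ENNReal) ≤ EReal.exp (entropy F) := by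
    have := EReal.exp_monotone (log_le_entropy_envelope hF hk)
    rwa [ENNReal.exp_log] at this
  have htop : EReal.exp (entropy F) = ⊤ := by
    refine ENNReal.eq_top_of_forall_nnreal_le fun r => ?_
    obtain ⟨m, hm⟩ := exists_nat_ge r
    refine le_trans ?_ (h (m + 1) m.succ_pos)
    exact_mod_cast hm.trans (Nat.cast_le.2 m.le_succ)
  exact EReal.exp_eq_top_iff.1 htop
end
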